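/- arXiv:1803.08140 — 3 statements merged into one kernel-verified Lean document; each statement's English description precedes it below -/
import Mathlib

section
/- Fix an integer r ≥ 2. Then E_r(n) · (log n)^{(r−1)/2} → c_r as n → ∞, where c_r = 1 / ((2π)^{(r−1)/2} · √r); that is, E_r(n) ∼ c_r / (log n)^{(r−1)/2}. -/
/-- ω_n(σ): the number of disjoint cycles of a permutation of `n` letters,
including fixed points. -/
def numCycles {n : ℕ} (σ : Equiv.Perm (Fin n)) : ℕ :=
  σ.cycleType.card + (n - σ.cycleType.sum)

/-- E_r(n): the probability that `r` independent uniformly random permutations of `n`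
letters all have the same number of cycles. -/
noncomputable def Er (r n : ℕ) : ℝ :=
  (Nat.card {v : Fin r → Equiv.Perm (Fin n) //
      ∀ i j, numCycles (v i) = numCycles (v j)} : ℝ) / (n.factorial : ℝ) ^ r

/-!
The generating function `∑ σ, z ^ ω(σ) = z (z + 1) ⋯ (z + n - 1)` says that the number of cycles is
distributed as a sum of independent Bernoulli variables of parameters `1, 1/2, …, 1/n`. Centred and
scaled by `log n` and `√(log n)`, its characteristic function tends to `exp (-s² / 2)`, and on the
range `|s| ≤ π √(log n)` it is dominated by a fixed Gaussian. Fourier inversion then gives the local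
limit theorem `√(log n) · P(ω = k) ≈ φ ((k - log n) / √(log n))`, uniformly in `k`, where `φ` is the
standard Gaussian density. Since `E_r(n)` is the mean of `P(ω = k) ^ (r - 1)` over a random `k`
distributed as `ω`, weak convergence yields
`(log n) ^ ((r - 1) / 2) E_r(n) → ∫ φ ^ (r - 1) dN(0, 1) = ∫ φ ^ r`.
-/

section CycleCount

open Equiv Equiv.Perm

section SwapMul

variable {α : Type*} [Fintype α] [DecidableEq α] {a : α}

-- If `c` is not a transposition, `swap a (c a) * c` is the cycle `c` with `a` cut out.
lemma card_cycleType_swap_mul_add_card_support {c : Perm α} (hc : c.IsCycle) (ha : c a ≠ a) :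
    (swap a (c a) * c).cycleType.card + c.support.card =
      (swap a (c a) * c).support.card + 2 := by
  by_cases hca : c (c a) = a
  · have hc_swap : c = swap a (c a) := hc.eq_swap_of_apply_apply_eq_self ha hca
    have h_one : swap a (c a) * c = 1 := by
      nth_rewrite 2 [hc_swap]
      exact swap_mul_self _ _
    have h_card : c.support.card = 2 := hc_swap ▸ card_support_swap ha.symm
    rw [h_one, h_card, cycleType_one, support_one, Multiset.card_zero, Finset.card_empty]
  · have h_mem : a ∈ c.support := mem_support.2 ha
    rw [(hc.swap_mul ha hca).cycleType, Multiset.card_singleton, support_swap_mul_eq c a hca,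
      Finset.sdiff_singleton_eq_erase, Finset.card_erase_of_mem h_mem]
    have := Finset.card_pos.2 ⟨a, h_mem⟩
    omega

lemma card_cycleType_swap_mul_add_sum_cycleType {σ : Perm α} (ha : σ a ≠ a) :
    (swap a (σ a) * σ).cycleType.card + σ.cycleType.sum =
      σ.cycleType.card + (swap a (σ a) * σ).cycleType.sum + 1 := by
  set c := σ.cycleOf a
  set τ := σ * c⁻¹
  have hca : c a = σ a := cycleOf_apply_self σ a
  have hcycle : c.IsCycle := isCycle_cycleOf σ ha
  have hdisj : Disjoint c τ :=
    (disjoint_mul_inv_of_mem_cycleFactorsFinset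
      (cycleOf_mem_cycleFactorsFinset_iff.2 (mem_support.2 ha))).symm
  have hσ : σ = c * τ := by rw [hdisj.commute.eq, inv_mul_cancel_right]
  have hdisj' : Disjoint (swap a (c a) * c) τ :=
    hdisj.mono (fun x hx => mem_support.2 (ne_and_ne_of_swap_mul_apply_ne_self
      (mem_support.1 hx)).1) le_rfl
  have hsplit := card_cycleType_swap_mul_add_card_support hcycle (hca.trans_ne ha)
  have hσ_type : σ.cycleType = {c.support.card} + τ.cycleType := by
    rw [hσ, hdisj.cycleType_mul, hcycle.cycleType]
  have hswap_type :
      (swap a (σ a) * σ).cycleType = (swap a (c a) * c).cycleType + τ.cycleType := by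
    rw [← hca, hσ, ← mul_assoc, hdisj'.cycleType_mul]
  rw [hσ_type, hswap_type]
  simp only [Multiset.card_add, Multiset.sum_add, Multiset.card_singleton, Multiset.sum_singleton,
    sum_cycleType]
  omega

end SwapMul

variable {n : ℕ}

lemma sum_cycleType_le_of_perm_fin (σ : Perm (Fin n)) : σ.cycleType.sum ≤ n :=
  (sum_cycleType_le σ).trans_eq (Fintype.card_fin n)

lemma numCycles_swap_mul {σ : Perm (Fin n)} {a : Fin n} (ha : σ a ≠ a) :
    numCycles (swap a (σ a) * σ) = numCycles σ + 1 := by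
  have h := card_cycleType_swap_mul_add_sum_cycleType ha
  have h₁ := sum_cycleType_le_of_perm_fin σ
  have h₂ := sum_cycleType_le_of_perm_fin (swap a (σ a) * σ)
  unfold numCycles
  omega

lemma decomposeFin_symm_zero_eq_extendDomain (e : Perm (Fin n)) :
    decomposeFin.symm (0, e) = e.extendDomain (finSuccAboveEquiv 0) := by
  ext x
  cases x using Fin.cases with
  | zero => rw [extendDomain_apply_not_subtype _ _ (by simp), decomposeFin_symm_apply_zero]
  | succ i =>
    have h := extendDomain_apply_image e (finSuccAboveEquiv 0) i
    simp only [finSuccAboveEquiv_apply, Fin.zero_succAbove] at h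
    rw [decomposeFin_symm_apply_succ, h, swap_self, refl_apply]

lemma numCycles_decomposeFin_symm_zero (e : Perm (Fin n)) :
    numCycles (decomposeFin.symm (0, e)) = numCycles e + 1 := by
  have h := sum_cycleType_le_of_perm_fin e
  unfold numCycles
  rw [decomposeFin_symm_zero_eq_extendDomain, cycleType_extendDomain]
  omega

lemma numCycles_decomposeFin_symm_succ (p : Fin n) (e : Perm (Fin n)) :
    numCycles (decomposeFin.symm (p.succ, e)) = numCycles e := by
  set σ := decomposeFin.symm (p.succ, e)
  have hσ : σ 0 = p.succ := decomposeFin_symm_apply_zero _ _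
  have hcut : swap 0 (σ 0) * σ = decomposeFin.symm (0, e) := by
    ext x
    cases x using Fin.cases <;> simp [σ]
  have h := numCycles_swap_mul (hσ.trans_ne p.succ_ne_zero)
  rw [hcut, numCycles_decomposeFin_symm_zero] at h
  omega

lemma sum_pow_numCycles {R : Type*} [CommSemiring R] (n : ℕ) (z : R) :
    ∑ σ : Perm (Fin n), z ^ numCycles σ = ∏ j ∈ Finset.range n, (z + j) := by
  induction n with
  | zero => simp [numCycles]
  | succ n ih =>
    rw [← Equiv.sum_comp decomposeFin.symm, Fintype.sum_prod_type, Fin.sum_univ_succ]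
    simp only [numCycles_decomposeFin_symm_zero, numCycles_decomposeFin_symm_succ, pow_succ,
      ← Finset.sum_mul, ih, Finset.sum_const, Finset.card_univ, Fintype.card_fin, nsmul_eq_mul,
      Finset.prod_range_succ]
    ring

end CycleCount

section CycleLaw

open Equiv MeasureTheory

section UniformImage

variable {α β : Type*}

/-- A tuple on which `f` is constant is its first entry together with further points of the fiber of
`f` through that entry. It turns the count of such tuples into a sum of powers of fiber sizes. -/
def constTupleEquiv (f : α → β) (m : ℕ) :
    {v : Fin (m + 1) → α // ∀ i j, f (v i) = f (v j)} ≃ Σ a, Fin m → {b // f b = f a} where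
  toFun v := ⟨v.1 0, fun i => ⟨v.1 i.succ, v.2 _ _⟩⟩
  invFun w := ⟨Fin.cons w.1 fun i => w.2 i, by
    have h : ∀ i, f (Fin.cons (α := fun _ => α) w.1 (fun i => (w.2 i : α)) i) = f w.1 :=
      Fin.cases rfl fun i => (w.2 i).2
    exact fun i j => (h i).trans (h j).symm⟩
  left_inv v := Subtype.ext (Fin.cons_self_tail v.1)
  right_inv _ := rfl

variable [Fintype α]

lemma card_constTuple (f : α → β) (m : ℕ) :
    Nat.card {v : Fin (m + 1) → α // ∀ i j, f (v i) = f (v j)} =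
      ∑ a, Nat.card {b // f b = f a} ^ m := by
  classical
  simp only [Nat.card_congr (constTupleEquiv f m), Nat.card_sigma, Nat.card_fun, Nat.card_fin]

variable [Nonempty α] [MeasurableSpace β] [DiscreteMeasurableSpace β]

lemma measureReal_map_uniformOfFintype (f : α → β) (b : β) :
    ((PMF.uniformOfFintype α).map f).toMeasure.real {b} =
      Nat.card {a // f a = b} / Fintype.card α := by
  classical
  let _ : MeasurableSpace α := ⊤
  have h_meas : Measurable f := measurable_from_top
  have hb : MeasurableSet {b} := .of_discrete
  rw [measureReal_def, PMF.toMeasure_map_apply _ _ _ h_meas hb,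
    PMF.toMeasure_uniformOfFintype_apply _ (h_meas hb), ENNReal.toReal_div,
    ENNReal.toReal_natCast, ENNReal.toReal_natCast, Nat.card_eq_fintype_card]
  rfl

variable [Countable β]

lemma integral_map_uniformOfFintype {E : Type*} [NormedAddCommGroup E] [NormedSpace ℝ E]
    [CompleteSpace E] (f : α → β) (g : β → E) :
    ∫ b, g b ∂((PMF.uniformOfFintype α).map f).toMeasure =
      (Fintype.card α : ℝ)⁻¹ • ∑ a, g (f a) := by
  let _ : MeasurableSpace α := ⊤
  rw [← PMF.toMeasure_map _ _ measurable_from_top, integral_map (by fun_prop) (by fun_prop),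
    PMF.integral_eq_sum]
  simp [Finset.smul_sum]

lemma integral_measureReal_singleton_pow_map_uniformOfFintype (f : α → β) (m : ℕ) :
    ∫ b, ((PMF.uniformOfFintype α).map f).toMeasure.real {b} ^ m
        ∂((PMF.uniformOfFintype α).map f).toMeasure =
      Nat.card {v : Fin (m + 1) → α // ∀ i j, f (v i) = f (v j)} /
        (Fintype.card α : ℝ) ^ (m + 1) := by
  simp only [integral_map_uniformOfFintype, measureReal_map_uniformOfFintype, card_constTuple,
    Nat.cast_sum, Nat.cast_pow, div_pow, ← Finset.sum_div, smul_eq_mul]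
  field_simp
  ring

end UniformImage

/-- The law of the number of cycles of a uniformly random permutation of `n` letters, as a measure
on `ℤ` so that Fourier inversion on the integer lattice applies to it. -/
noncomputable def cycleLaw (n : ℕ) : Measure ℤ :=
  ((PMF.uniformOfFintype (Perm (Fin n))).map fun σ => (numCycles σ : ℤ)).toMeasure

instance (n : ℕ) : IsProbabilityMeasure (cycleLaw n) :=
  PMF.toMeasure.isProbabilityMeasure _

lemma Er_add_one (m n : ℕ) :
    Er (m + 1) n = ∫ k, (cycleLaw n).real {k} ^ m ∂cycleLaw n := by
  rw [cycleLaw, integral_measureReal_singleton_pow_map_uniformOfFintype, Fintype.card_perm,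
    Fintype.card_fin]
  simp only [Er, Nat.cast_inj]

lemma integral_pow_cycleLaw (n : ℕ) (z : ℂ) :
    ∫ k, z ^ k ∂cycleLaw n = ∏ j ∈ Finset.range n, (1 + ((j + 1 : ℝ)⁻¹ : ℝ) * (z - 1)) := by
  have h_term (j : ℕ) :
      z + j = ((j + 1 : ℕ) : ℂ) * (1 + ((j + 1 : ℝ)⁻¹ : ℝ) * (z - 1)) := by
    have : (j + 1 : ℂ) ≠ 0 := Nat.cast_add_one_ne_zero j
    push_cast
    field_simp
    ring
  rw [cycleLaw, integral_map_uniformOfFintype]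
  simp only [zpow_natCast, sum_pow_numCycles, h_term, Finset.prod_mul_distrib, Fintype.card_perm,
    Fintype.card_fin, ← Nat.cast_prod, Finset.prod_range_add_one_eq_factorial]
  rw [Complex.real_smul]
  push_cast
  rw [inv_mul_cancel_left₀ (mod_cast n.factorial_ne_zero)]

end CycleLaw

section BernoulliProduct

open Complex

lemma norm_one_add_mul_exp_sub_one_sq (a t : ℝ) :
    ‖1 + a * (exp (t * I) - 1)‖ ^ 2 = 1 - 2 * ((1 - Real.cos t) * (a - a ^ 2)) := by
  rw [← normSq_eq_norm_sq, normSq_apply]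
  simp only [add_re, add_im, one_re, one_im, re_ofReal_mul, im_ofReal_mul, sub_re, sub_im,
    exp_ofReal_mul_I_re, exp_ofReal_mul_I_im]
  linear_combination a ^ 2 * Real.sin_sq_add_cos_sq t

lemma norm_one_add_mul_exp_sub_one_le (a t : ℝ) :
    ‖1 + a * (exp (t * I) - 1)‖ ≤ Real.exp (-((1 - Real.cos t) * (a - a ^ 2))) := by
  refine (pow_le_pow_iff_left₀ (norm_nonneg _) (Real.exp_pos _).le two_ne_zero).1 ?_
  rw [norm_one_add_mul_exp_sub_one_sq, ← Real.exp_nat_mul]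
  refine le_trans (le_of_eq ?_) (Real.add_one_le_exp _)
  push_cast
  ring

lemma norm_prod_sub_prod_le_sum {ι R : Type*} [NormedCommRing R] [NormOneClass R] {s : Finset ι}
    {f g : ι → R} (hf : ∀ i ∈ s, ‖f i‖ ≤ 1) (hg : ∀ i ∈ s, ‖g i‖ ≤ 1) :
    ‖∏ i ∈ s, f i - ∏ i ∈ s, g i‖ ≤ ∑ i ∈ s, ‖f i - g i‖ := by
  induction s using Finset.cons_induction with
  | empty => simp
  | cons a s ha ih =>
    rw [Finset.forall_mem_cons] at hf hg
    have hs : ‖∏ i ∈ s, g i‖ ≤ 1 :=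
      (Finset.norm_prod_le s g).trans (Finset.prod_le_one (fun _ _ => norm_nonneg _) hg.2)
    rw [Finset.prod_cons, Finset.prod_cons, Finset.sum_cons]
    calc ‖f a * ∏ i ∈ s, f i - g a * ∏ i ∈ s, g i‖
        = ‖(f a - g a) * ∏ i ∈ s, g i + f a * (∏ i ∈ s, f i - ∏ i ∈ s, g i)‖ := by ring_nf
      _ ≤ ‖f a - g a‖ * ‖∏ i ∈ s, g i‖ + ‖f a‖ * ‖∏ i ∈ s, f i - ∏ i ∈ s, g i‖ :=
          (norm_add_le _ _).trans (add_le_add (norm_mul_le _ _) (norm_mul_le _ _))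
      _ ≤ ‖f a - g a‖ + ‖∏ i ∈ s, f i - ∏ i ∈ s, g i‖ :=
          add_le_add (mul_le_of_le_one_right (norm_nonneg _) hs)
            (mul_le_of_le_one_left (norm_nonneg _) hf.1)
      _ ≤ ‖f a - g a‖ + ∑ i ∈ s, ‖f i - g i‖ := by grw [ih hf.2 hg.2]

lemma norm_prod_one_add_mul_exp_sub_one_le {ι : Type*} (s : Finset ι) (p : ι → ℝ) (t : ℝ) :
    ‖∏ i ∈ s, (1 + p i * (exp (t * I) - 1))‖ ≤
      Real.exp (-((1 - Real.cos t) * (∑ i ∈ s, p i - ∑ i ∈ s, p i ^ 2))) := by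
  rw [norm_prod, ← Finset.sum_sub_distrib, Finset.mul_sum, ← Finset.sum_neg_distrib, Real.exp_sum]
  exact Finset.prod_le_prod (fun _ _ => norm_nonneg _)
    fun i _ => norm_one_add_mul_exp_sub_one_le (p i) t

-- Poisson approximation: the product is the Fourier transform of a sum of Bernoulli variables, the
-- exponential that of the Poisson law with the same mean.
lemma norm_prod_one_add_mul_sub_exp_le {ι : Type*} {s : Finset ι} {p : ι → ℝ} {t : ℝ}
    (hp₀ : ∀ i ∈ s, 0 ≤ p i) (hp₁ : ∀ i ∈ s, p i ≤ 1) (ht : ‖exp (t * I) - 1‖ ≤ 1) :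
    ‖∏ i ∈ s, (1 + p i * (exp (t * I) - 1)) - exp ((∑ i ∈ s, p i : ℝ) * (exp (t * I) - 1))‖ ≤
      ‖exp (t * I) - 1‖ ^ 2 * ∑ i ∈ s, p i ^ 2 := by
  set w := exp (t * I) - 1
  have hw : w.re ≤ 0 := by simp [w, exp_ofReal_mul_I_re, Real.cos_le_one]
  rw [ofReal_sum, Finset.sum_mul, exp_sum, Finset.mul_sum]
  have h_factor : ∀ i ∈ s, ‖1 + p i * w‖ ≤ 1 := fun i hi => by
    refine (norm_one_add_mul_exp_sub_one_le (p i) t).trans (Real.exp_le_one_iff.2 ?_)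
    have h_cos := sub_nonneg.2 (Real.cos_le_one t)
    have h_var := sub_nonneg.2 (pow_le_of_le_one (hp₀ i hi) (hp₁ i hi) two_ne_zero)
    exact neg_nonpos.2 (mul_nonneg h_cos h_var)
  have h_exp : ∀ i ∈ s, ‖exp (p i * w)‖ ≤ 1 := fun i hi => by
    rw [norm_exp, Real.exp_le_one_iff, re_ofReal_mul]
    exact mul_nonpos_of_nonneg_of_nonpos (hp₀ i hi) hw
  refine (norm_prod_sub_prod_le_sum h_factor h_exp).trans (Finset.sum_le_sum fun i hi => ?_)
  have h_norm : ‖(p i : ℂ) * w‖ = ‖w‖ * p i := by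
    rw [norm_mul, norm_real, Real.norm_of_nonneg (hp₀ i hi), mul_comm]
  have h_le : ‖(p i : ℂ) * w‖ ≤ 1 := h_norm ▸ mul_le_one₀ ht (hp₀ i hi) (hp₁ i hi)
  rw [← mul_pow, ← h_norm, norm_sub_rev, ← sub_sub]
  exact norm_exp_sub_one_sub_id_le h_le

end BernoulliProduct

section LatticeLocalLimit

open Complex Filter MeasureTheory Topology

open scoped Real

lemma integral_exp_intCast_mul_I (m : ℤ) :
    ∫ t in -π..π, exp ((t * m : ℝ) * I) = if m = 0 then (2 * π : ℂ) else 0 := by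
  split_ifs with hm
  · simp [hm, two_mul]
  · have h_ne : (m * I : ℂ) ≠ 0 := mul_ne_zero (mod_cast hm) I_ne_zero
    have h_period : exp (m * I * (π : ℝ)) = exp (m * I * (-π : ℝ)) :=
      exp_eq_exp_iff_exists_int.2 ⟨m, by push_cast; ring⟩
    calc ∫ t in -π..π, exp ((t * m : ℝ) * I)
        = ∫ t in -π..π, exp (m * I * t) := by
          congr! 3
          push_cast
          ring
      _ = 0 := by rw [integral_exp_mul_complex h_ne, h_period, sub_self, zero_div]

lemma charFun_map_intCast (μ : Measure ℤ) (t : ℝ) :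
    charFun (μ.map ((↑) : ℤ → ℝ)) t = ∫ k, exp ((t * k : ℝ) * I) ∂μ := by
  rw [charFun_apply_real, integral_map (by fun_prop) (by fun_prop)]
  push_cast
  rfl

lemma integral_charFun_mul_exp_intCast (μ : Measure ℤ) [IsFiniteMeasure μ] (k : ℤ) :
    ∫ t in -π..π, charFun (μ.map ((↑) : ℤ → ℝ)) t * exp ((-(t * k) : ℝ) * I) =
      2 * π * μ.real {k} := by
  have : IsFiniteMeasure (volume.restrict (Set.uIoc (-π) π)) :=
    Real.isFiniteMeasure_restrict_Ioc _ _
  have h_int : Integrable (Function.uncurry fun (t : ℝ) (j : ℤ) => exp ((t * (j - k : ℤ) : ℝ) * I))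
      ((volume.restrict (Set.uIoc (-π) π)).prod μ) := by
    refine (integrable_const (1 : ℝ)).mono' (by fun_prop) (.of_forall fun x => ?_)
    exact (norm_exp_ofReal_mul_I _).le
  calc ∫ t in -π..π, charFun (μ.map ((↑) : ℤ → ℝ)) t * exp ((-(t * k) : ℝ) * I)
      = ∫ t in -π..π, ∫ j, exp ((t * (j - k : ℤ) : ℝ) * I) ∂μ := by
        simp only [charFun_map_intCast, ← integral_mul_const, ← exp_add]
        congr! 5
        push_cast
        ring
    _ = ∫ j, ({k} : Set ℤ).indicator (fun _ => (2 * π : ℂ)) j ∂μ := by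
        rw [intervalIntegral_integral_swap h_int]
        simp only [integral_exp_intCast_mul_I, sub_eq_zero, Set.indicator_apply,
          Set.mem_singleton_iff]
    _ = 2 * π * μ.real {k} := by
        rw [integral_indicator_const _ (measurableSet_singleton k), real_smul, mul_comm]

/-- The law `μ` of an integer variable, centred at `m` and scaled by `σ`: its image under
`k ↦ (k - m) / σ`. The centring and scale need not be the mean and standard deviation of `μ`; for
`σ = 0` the image is concentrated at `0`. -/
noncomputable def standardized (μ : Measure ℤ) (m σ : ℝ) : Measure ℝ :=
  μ.map fun k : ℤ => (k - m) / σ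

instance (μ : Measure ℤ) [IsFiniteMeasure μ] (m σ : ℝ) : IsFiniteMeasure (standardized μ m σ) :=
  Measure.isFiniteMeasure_map μ fun k : ℤ => (k - m) / σ

instance (μ : Measure ℤ) [IsProbabilityMeasure μ] (m σ : ℝ) :
    IsProbabilityMeasure (standardized μ m σ) :=
  Measure.isProbabilityMeasure_map (by fun_prop)

lemma charFun_standardized (μ : Measure ℤ) (m σ s : ℝ) :
    charFun (standardized μ m σ) s =
      charFun (μ.map ((↑) : ℤ → ℝ)) (s / σ) * exp ((-(s * m / σ) : ℝ) * I) := by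
  rw [charFun_map_intCast, charFun_apply_real, standardized, integral_map (by fun_prop)
    (by fun_prop), ← integral_mul_const]
  congr! 2
  rw [← exp_add]
  push_cast
  ring_nf

lemma integral_charFun_standardized_mul_exp (μ : Measure ℤ) [IsFiniteMeasure μ] (m : ℝ) {σ : ℝ}
    (hσ : σ ≠ 0) (k : ℤ) :
    ∫ s in -(π * σ)..π * σ,
        charFun (standardized μ m σ) s * exp ((-(s * ((k - m) / σ)) : ℝ) * I) =
      2 * π * (σ * μ.real {k} : ℝ) := by
  have h_scale (s : ℝ) :
      charFun (standardized μ m σ) s * exp ((-(s * ((k - m) / σ)) : ℝ) * I) =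
        charFun (μ.map ((↑) : ℤ → ℝ)) (s / σ) * exp ((-(s / σ * k) : ℝ) * I) := by
    rw [charFun_standardized, mul_assoc, ← exp_add, ← add_mul, ← ofReal_add]
    ring_nf
  simp only [h_scale]
  rw [intervalIntegral.integral_comp_div
      (fun t => charFun (μ.map ((↑) : ℤ → ℝ)) t * exp ((-(t * k) : ℝ) * I)) hσ, neg_div,
    mul_div_cancel_right₀ _ hσ, integral_charFun_mul_exp_intCast, real_smul]
  push_cast
  ring

section TruncatedDominatedConvergence

variable {ι E : Type*} [NormedAddCommGroup E] {l : Filter ι} {F : ι → ℝ → E} {φ : ℝ → E}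
  {g : ℝ → ℝ} {a : ι → ℝ}

lemma norm_le_of_tendsto_of_bound [l.NeBot] (ha : Tendsto a l atTop)
    (hbound : ∀ᶠ n in l, ∀ s, |s| ≤ a n → ‖F n s‖ ≤ g s)
    (hlim : ∀ s, Tendsto (F · s) l (𝓝 (φ s))) (s : ℝ) : ‖φ s‖ ≤ g s := by
  refine le_of_tendsto (hlim s).norm ?_
  filter_upwards [hbound, ha.eventually_ge_atTop |s|] with n hn hs using hn s hs

lemma norm_indicator_Ioc_le {f : ℝ → E} {b : ℝ} (hg : ∀ s, 0 ≤ g s)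
    (hbound : ∀ s, |s| ≤ b → ‖f s‖ ≤ g s) (s : ℝ) : ‖(Set.Ioc (-b) b).indicator f s‖ ≤ g s := by
  rw [norm_indicator_eq_indicator_norm]
  exact Set.indicator_le' (fun s hs => hbound s (abs_le.2 ⟨hs.1.le, hs.2⟩)) (fun s _ => hg s) s

lemma tendsto_integral_norm_indicator_sub [l.NeBot] [l.IsCountablyGenerated]
    (ha : Tendsto a l atTop) (hF : ∀ n, AEStronglyMeasurable (F n)) (hφ : AEStronglyMeasurable φ)
    (hg : Integrable g) (hbound : ∀ᶠ n in l, ∀ s, |s| ≤ a n → ‖F n s‖ ≤ g s)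
    (hlim : ∀ s, Tendsto (F · s) l (𝓝 (φ s))) :
    Tendsto (fun n => ∫ s, ‖(Set.Ioc (-a n) (a n)).indicator (F n) s - φ s‖) l (𝓝 0) := by
  have hφ_le := norm_le_of_tendsto_of_bound ha hbound hlim
  have hg_nonneg (s : ℝ) : 0 ≤ g s := (norm_nonneg _).trans (hφ_le s)
  rw [← integral_zero ℝ ℝ]
  refine tendsto_integral_filter_of_dominated_convergence (fun s => g s + g s) (.of_forall
    fun n => ((hF n).indicator measurableSet_Ioc |>.sub hφ).norm) ?_ (hg.add hg)
    (.of_forall fun s => ?_)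
  · filter_upwards [hbound] with n hn
    refine .of_forall fun s => ?_
    rw [norm_norm]
    exact (norm_sub_le _ _).trans (add_le_add (norm_indicator_Ioc_le hg_nonneg hn s) (hφ_le s))
  · rw [← norm_zero (E := E), ← sub_self (φ s)]
    refine (((hlim s).congr' ?_).sub_const _).norm
    filter_upwards [ha.eventually_gt_atTop |s|] with n hn
    exact (Set.indicator_of_mem (s := Set.Ioc (-a n) (a n))
      ⟨(abs_lt.1 hn).1, (abs_lt.1 hn).2.le⟩ _).symm

end TruncatedDominatedConvergence

lemma norm_integral_mul_exp_sub_integral_mul_exp_le {f g : ℝ → ℂ} (hf : Integrable f)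
    (hg : Integrable g) (x : ℝ) :
    ‖(∫ s, f s * exp ((-(s * x) : ℝ) * I)) - ∫ s, g s * exp ((-(s * x) : ℝ) * I)‖ ≤
      ∫ s, ‖f s - g s‖ := by
  have h_mul {h : ℝ → ℂ} (hh : Integrable h) :
      Integrable fun s : ℝ => h s * exp ((-(s * x) : ℝ) * I) :=
    hh.mul_bdd (c := 1) (by fun_prop) (.of_forall fun s => (norm_exp_ofReal_mul_I _).le)
  rw [← integral_sub (h_mul hf) (h_mul hg)]
  refine (norm_integral_le_integral_norm _).trans_eq ?_
  simp only [← sub_mul, norm_mul, norm_exp_ofReal_mul_I, mul_one]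

theorem tendstoUniformly_measureReal_singleton {ι : Type*} {l : Filter ι} [l.NeBot]
    [l.IsCountablyGenerated] {μ : ι → Measure ℤ} [∀ n, IsFiniteMeasure (μ n)] {ν : Measure ℝ}
    [IsFiniteMeasure ν] {m σ : ι → ℝ} {g ρ : ℝ → ℝ}
    (hσ : Tendsto σ l atTop)
    (hlim : ∀ s, Tendsto (fun n => charFun (standardized (μ n) (m n) (σ n)) s) l
      (𝓝 (charFun ν s)))
    (hg : Integrable g)
    (hbound : ∀ᶠ n in l, ∀ s, |s| ≤ π * σ n → ‖charFun (standardized (μ n) (m n) (σ n)) s‖ ≤ g s)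
    (hρ : ∀ x, ∫ s, charFun ν s * exp ((-(s * x) : ℝ) * I) = 2 * π * ρ x) :
    TendstoUniformly (fun n k => σ n * (μ n).real {k} - ρ ((k - m n) / σ n)) 0 l := by
  set F := fun n => charFun (standardized (μ n) (m n) (σ n))
  have hσ_pi : Tendsto (fun n => π * σ n) l atTop := hσ.const_mul_atTop Real.pi_pos
  have hφ_le := norm_le_of_tendsto_of_bound hσ_pi hbound hlim
  have hg_nonneg (s : ℝ) : 0 ≤ g s := (norm_nonneg _).trans (hφ_le s)
  have hF_meas (n : ι) : AEStronglyMeasurable (F n) :=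
    stronglyMeasurable_charFun.aestronglyMeasurable
  have hφ_meas : AEStronglyMeasurable (charFun ν) := stronglyMeasurable_charFun.aestronglyMeasurable
  have hL1 := tendsto_integral_norm_indicator_sub hσ_pi hF_meas hφ_meas hg hbound hlim
  refine Metric.tendstoUniformly_iff.2 fun ε hε => ?_
  filter_upwards [hL1.eventually_lt_const hε, hbound, hσ.eventually_gt_atTop 0] with n hn hbn hσn k
  set G := (Set.Ioc (-(π * σ n)) (π * σ n)).indicator (F n)
  have hG : ∫ s, G s * exp ((-(s * ((k - m n) / σ n)) : ℝ) * I) =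
      2 * π * (σ n * (μ n).real {k} : ℝ) := by
    have h_le : -(π * σ n) ≤ π * σ n := neg_le_self (by positivity)
    rw [← integral_charFun_standardized_mul_exp (μ n) (m n) hσn.ne',
      intervalIntegral.integral_of_le h_le, ← integral_indicator measurableSet_Ioc]
    simp only [G, Set.indicator_mul_left]
    rfl
  have h := norm_integral_mul_exp_sub_integral_mul_exp_le
    (hg.mono' ((hF_meas n).indicator measurableSet_Ioc)
      (.of_forall (norm_indicator_Ioc_le hg_nonneg hbn)))
    (hg.mono' hφ_meas (.of_forall hφ_le)) ((k - m n) / σ n)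
  rw [hG, hρ, ← mul_sub, ← ofReal_sub, norm_mul, ← ofReal_ofNat,
    ← ofReal_mul, norm_real, norm_real] at h
  rw [Pi.zero_apply, dist_zero_left]
  refine ((le_mul_of_one_le_left (norm_nonneg _) ?_).trans h).trans_lt hn
  rw [Real.norm_of_nonneg Real.two_pi_pos.le]
  linarith [Real.pi_gt_three]

lemma tendstoUniformly_comp_sub_comp {ι κ E E' : Type*} [SeminormedAddCommGroup E]
    [ProperSpace E] [SeminormedAddCommGroup E'] {l : Filter ι} {f h : ι → κ → E} {G : E → E'}
    {C : ℝ} (hG : Continuous G) (hfh : TendstoUniformly (fun n k => f n k - h n k) 0 l)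
    (hC : ∀ n k, ‖h n k‖ ≤ C) :
    TendstoUniformly (fun n k => G (f n k) - G (h n k)) 0 l := by
  refine Metric.tendstoUniformly_iff.2 fun ε hε => ?_
  obtain ⟨δ, hδ, hδε⟩ := Metric.uniformContinuousOn_iff.1
    ((isCompact_closedBall (0 : E) (C + 1)).uniformContinuousOn_of_continuous hG.continuousOn) ε hε
  filter_upwards [Metric.tendstoUniformly_iff.1 hfh _ (lt_min hδ one_pos)] with n hn k
  specialize hn k
  rw [Pi.zero_apply, dist_zero_left] at hn ⊢
  have hh : h n k ∈ Metric.closedBall 0 (C + 1) :=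
    mem_closedBall_zero_iff.2 ((hC n k).trans (le_add_of_nonneg_right zero_le_one))
  have hf : f n k ∈ Metric.closedBall 0 (C + 1) := by
    rw [mem_closedBall_zero_iff, ← add_sub_cancel (h n k) (f n k)]
    exact norm_add_le_of_le (hC n k) (hn.le.trans (min_le_right _ _))
  rw [← dist_eq_norm] at hn ⊢
  exact hδε _ hf _ hh (hn.trans_le (min_le_left _ _))

lemma tendsto_integral_of_tendstoUniformly_zero {ι κ E : Type*} [MeasurableSpace κ]
    [NormedAddCommGroup E] [NormedSpace ℝ E] {l : Filter ι} {μ : ι → Measure κ}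
    [∀ n, IsProbabilityMeasure (μ n)] {f : ι → κ → E} (hf : TendstoUniformly f 0 l) :
    Tendsto (fun n => ∫ k, f n k ∂μ n) l (𝓝 0) := by
  refine Metric.tendsto_nhds.2 fun ε hε => ?_
  filter_upwards [Metric.tendstoUniformly_iff.1 hf (ε / 2) (half_pos hε)] with n hn
  rw [dist_zero_right]
  refine (norm_integral_le_of_norm_le_const (C := ε / 2) (.of_forall fun k => ?_)).trans_lt ?_
  · simpa only [Pi.zero_apply, dist_zero_left] using (hn k).le
  · rw [probReal_univ, mul_one]
    exact half_lt_self hε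

theorem tendsto_integral_measureReal_singleton_pow {μ : ℕ → Measure ℤ}
    [∀ n, IsProbabilityMeasure (μ n)] {ν : Measure ℝ} [IsProbabilityMeasure ν] {m σ : ℕ → ℝ}
    {ρ : ℝ → ℝ} {C : ℝ} (hρ_cont : Continuous ρ) (hρ_le : ∀ x, ‖ρ x‖ ≤ C)
    (hlim : ∀ s, Tendsto (fun n => charFun (standardized (μ n) (m n) (σ n)) s) atTop
      (𝓝 (charFun ν s)))
    (hρ : TendstoUniformly (fun n k => σ n * (μ n).real {k} - ρ ((k - m n) / σ n)) 0 atTop)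
    (p : ℕ) :
    Tendsto (fun n => ∫ k, (σ n * (μ n).real {k}) ^ p ∂μ n) atTop (𝓝 (∫ x, ρ x ^ p ∂ν)) := by
  have h_weak : Tendsto (fun n => ∫ k, ρ ((k - m n) / σ n) ^ p ∂μ n) atTop
      (𝓝 (∫ x, ρ x ^ p ∂ν)) := by
    have h := ProbabilityMeasure.tendsto_iff_forall_integral_tendsto.1
      (ProbabilityMeasure.tendsto_iff_tendsto_charFun (μ₀ := ⟨ν, inferInstance⟩)
        (μ := fun n => ⟨standardized (μ n) (m n) (σ n), inferInstance⟩).2 hlim)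
      (.ofNormedAddCommGroup ρ hρ_cont C hρ_le ^ p)
    refine h.congr fun n => ?_
    exact integral_map (by fun_prop) (by fun_prop)
  have h_diff := tendsto_integral_of_tendstoUniformly_zero (μ := μ)
    (tendstoUniformly_comp_sub_comp (continuous_pow p) hρ fun n k => hρ_le _)
  rw [← zero_add (∫ x, ρ x ^ p ∂ν)]
  refine (h_diff.add h_weak).congr fun n => ?_
  rw [integral_sub, sub_add_cancel]
  · refine .of_bound (by fun_prop) (|σ n| ^ p) (.of_forall fun k => ?_)
    rw [norm_pow, norm_mul, Real.norm_of_nonneg measureReal_nonneg]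
    exact pow_le_pow_left₀ (by positivity)
      (mul_le_of_le_one_right (norm_nonneg _) measureReal_le_one) p
  · refine .of_bound (by fun_prop) (C ^ p) (.of_forall fun k => ?_)
    rw [norm_pow]
    exact pow_le_pow_left₀ (norm_nonneg _) (hρ_le _) p

end LatticeLocalLimit

section GaussianDensity

open Complex MeasureTheory ProbabilityTheory

open scoped NNReal Real

variable (μ : ℝ) (v : ℝ≥0)

lemma continuous_gaussianPDFReal : Continuous (gaussianPDFReal μ v) := by
  unfold gaussianPDFReal
  fun_prop

lemma norm_gaussianPDFReal_le (x : ℝ) : ‖gaussianPDFReal μ v x‖ ≤ (√(2 * π * v))⁻¹ := by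
  rw [Real.norm_of_nonneg (gaussianPDFReal_nonneg μ v x), gaussianPDFReal]
  refine mul_le_of_le_one_right (by positivity) (Real.exp_le_one_iff.2 ?_)
  rw [neg_div]
  exact neg_nonpos.2 (by positivity)

variable {v}

lemma integral_charFun_gaussianReal_mul_exp (hv : v ≠ 0) (x : ℝ) :
    ∫ s, charFun (gaussianReal μ v) s * exp ((-(s * x) : ℝ) * I) =
      2 * π * gaussianPDFReal μ v x := by
  have : (0 : ℝ) < v := NNReal.coe_pos.2 (pos_iff_ne_zero.2 hv)
  have h_integrand (s : ℝ) : charFun (gaussianReal μ v) s * exp ((-(s * x) : ℝ) * I) =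
      exp (I * (μ - x : ℝ) * s) * exp (-(v / 2 : ℝ) * s ^ 2) := by
    rw [charFun_gaussianReal, ← exp_add, ← exp_add]
    push_cast
    ring_nf
  have h_const : √(π / (v / 2)) = 2 * π * (√(2 * π * v))⁻¹ := by
    rw [eq_mul_inv_iff_mul_eq₀ (by positivity), ← Real.sqrt_mul (by positivity),
      Real.sqrt_eq_iff_mul_self_eq (by positivity) (by positivity)]
    field_simp
  simp only [h_integrand]
  rw [fourierIntegral_gaussian (by rw [ofReal_re]; positivity)]
  have h_sqrt : ((π : ℂ) / (v / 2 : ℝ)) ^ (1 / 2 : ℂ) = (√(π / (v / 2)) : ℝ) := by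
    rw [Real.sqrt_eq_rpow, ofReal_cpow (by positivity)]
    push_cast
    rfl
  rw [h_sqrt, h_const, gaussianPDFReal]
  push_cast
  rw [mul_assoc]
  congr 3
  field_simp
  ring

lemma integral_gaussianPDFReal_pow_gaussianReal (hv : v ≠ 0) (p : ℕ) :
    ∫ x, gaussianPDFReal μ v x ^ p ∂gaussianReal μ v =
      (√(2 * π * v))⁻¹ ^ p * (√(p + 1))⁻¹ := by
  have : (0 : ℝ) < v := NNReal.coe_pos.2 (pos_iff_ne_zero.2 hv)
  have h_pow (x : ℝ) : gaussianPDFReal μ v x • gaussianPDFReal μ v x ^ p =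
      (√(2 * π * v))⁻¹ ^ (p + 1) * Real.exp (-((p + 1) / (2 * v)) * (x - μ) ^ 2) := by
    rw [smul_eq_mul, ← pow_succ', gaussianPDFReal, mul_pow, ← Real.exp_nat_mul]
    push_cast
    ring_nf
  have h_const : √(π / ((p + 1) / (2 * v))) = √(2 * π * v) * (√(p + 1))⁻¹ := by
    rw [← Real.sqrt_inv, ← Real.sqrt_mul (by positivity)]
    field_simp
  rw [integral_gaussianReal_eq_integral_smul hv]
  simp only [h_pow]
  rw [integral_const_mul,
    integral_sub_right_eq_self (fun x => Real.exp (-((p + 1) / (2 * v)) * x ^ 2)) μ,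
    integral_gaussian, h_const, pow_succ, mul_assoc, inv_mul_cancel_left₀ (by positivity)]

end GaussianDensity

section CycleLawAsymptotics

open Complex Filter MeasureTheory ProbabilityTheory Topology

open scoped Real

lemma charFun_cycleLaw (n : ℕ) (t : ℝ) :
    charFun ((cycleLaw n).map ((↑) : ℤ → ℝ)) t =
      ∏ j ∈ Finset.range n, (1 + ((j + 1 : ℝ)⁻¹ : ℝ) * (exp (t * I) - 1)) := by
  rw [charFun_map_intCast, ← integral_pow_cycleLaw]
  congr! 2
  rw [← exp_int_mul]
  push_cast
  ring_nf

lemma sum_range_inv_add_one (n : ℕ) : ∑ j ∈ Finset.range n, (j + 1 : ℝ)⁻¹ = harmonic n := by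
  simp [harmonic]

lemma sum_range_inv_add_one_sq_le_two (n : ℕ) :
    ∑ j ∈ Finset.range n, ((j + 1 : ℝ)⁻¹) ^ 2 ≤ 2 := by
  have h_shift := Finset.sum_Ico_add' (fun j : ℕ => ((j : ℝ) ^ 2)⁻¹) 0 n 1
  have h_bound := sum_Ioo_inv_sq_le (α := ℝ) 0 (n + 1)
  rw [Nat.cast_zero, zero_add, div_one] at h_bound
  simp only [Nat.cast_add_one, zero_add] at h_shift
  rw [Finset.range_eq_Ico]
  simp only [inv_pow]
  exact h_shift.trans_le h_bound

lemma log_le_harmonic (n : ℕ) : Real.log n ≤ harmonic n := by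
  simpa only [Nat.floor_natCast] using log_le_harmonic_floor n n.cast_nonneg

lemma norm_charFun_cycleLaw_le {n : ℕ} {t : ℝ} (ht : |t| ≤ π) :
    ‖charFun ((cycleLaw n).map ((↑) : ℤ → ℝ)) t‖ ≤
      Real.exp (4 - 2 / π ^ 2 * (t ^ 2 * Real.log n)) := by
  rw [charFun_cycleLaw]
  refine (norm_prod_one_add_mul_exp_sub_one_le _ _ t).trans (Real.exp_le_exp.2 ?_)
  have h_cos : 2 / π ^ 2 * t ^ 2 ≤ 1 - Real.cos t := by
    linarith [Real.cos_le_one_sub_mul_cos_sq ht]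
  have h_main : 2 / π ^ 2 * t ^ 2 * Real.log n ≤
      (1 - Real.cos t) * ∑ j ∈ Finset.range n, (j + 1 : ℝ)⁻¹ := by
    rw [sum_range_inv_add_one]
    exact mul_le_mul h_cos (log_le_harmonic n) (Real.log_natCast_nonneg n)
      (sub_nonneg.2 (Real.cos_le_one t))
  have h_error : (1 - Real.cos t) * ∑ j ∈ Finset.range n, ((j + 1 : ℝ)⁻¹) ^ 2 ≤ 2 * 2 :=
    mul_le_mul (by linarith [Real.neg_one_le_cos t]) (sum_range_inv_add_one_sq_le_two n)
      (by positivity) zero_le_two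
  rw [mul_sub]
  linarith

lemma norm_charFun_standardized_cycleLaw_le {n : ℕ} {s : ℝ} (hs : |s| ≤ π * √(Real.log n)) :
    ‖charFun (standardized (cycleLaw n) (Real.log n) (√(Real.log n))) s‖ ≤
      Real.exp (4 - 2 / π ^ 2 * s ^ 2) := by
  have ht : |s / √(Real.log n)| ≤ π := by
    rw [abs_div, abs_of_nonneg (Real.sqrt_nonneg _)]
    exact div_le_of_le_mul₀ (Real.sqrt_nonneg _) Real.pi_pos.le hs
  have h_scale : s / √(Real.log n) * √(Real.log n) = s :=
    div_mul_cancel_of_imp fun h => by simpa [h] using hs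
  rw [charFun_standardized, norm_mul, norm_exp_ofReal_mul_I, mul_one]
  refine (norm_charFun_cycleLaw_le ht).trans_eq ?_
  rw [← Real.sq_sqrt (Real.log_natCast_nonneg n), Real.sqrt_sq (Real.sqrt_nonneg _), ← mul_pow,
    h_scale]

lemma tendsto_div_mul_I_zero {ι : Type*} {l : Filter ι} {σ : ι → ℝ} (hσ : Tendsto σ l atTop)
    (s : ℝ) : Tendsto (fun n => ((s / σ n : ℝ) : ℂ) * I) l (𝓝 0) := by
  have h : Continuous fun t : ℝ => (t * I : ℂ) := by fun_prop
  exact (h.tendsto' 0 0 (by simp)).comp (hσ.const_div_atTop s)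

lemma tendsto_sq_mul_exp_sub_one_sub {ι : Type*} {l : Filter ι} {σ : ι → ℝ}
    (hσ : Tendsto σ l atTop) (s : ℝ) :
    Tendsto
      (fun n => (σ n : ℂ) ^ 2 * (exp (((s / σ n : ℝ) : ℂ) * I) - 1) - ((s * σ n : ℝ) : ℂ) * I) l
      (𝓝 (-(s : ℂ) ^ 2 / 2)) := by
  have h_cancel : ∀ᶠ n in l, (s : ℂ) / σ n * σ n = s := by
    filter_upwards [hσ.eventually_ne_atTop 0] with n hn
    exact div_mul_cancel₀ _ (ofReal_ne_zero.2 hn)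
  have h_quadratic : Tendsto (fun n => (σ n : ℂ) ^ 2 * (((s / σ n : ℝ) : ℂ) * I) ^ 2) l
      (𝓝 (-(s : ℂ) ^ 2)) := by
    refine tendsto_const_nhds.congr' (h_cancel.mono fun n hn => ?_)
    simp only [ofReal_div]
    linear_combination ((s : ℂ) / σ n * σ n + s) * hn - ((s : ℂ) / σ n * σ n) ^ 2 * I_sq
  have h_remainder : Tendsto (fun n => (σ n : ℂ) ^ 2 *
      (exp (((s / σ n : ℝ) : ℂ) * I) -
        ∑ i ∈ Finset.range 3, (((s / σ n : ℝ) : ℂ) * I) ^ i / i.factorial)) l (𝓝 0) :=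
    ((Asymptotics.isBigO_refl _ _).mul_isLittleO
      ((exp_sub_sum_range_succ_isLittleO_pow 2).comp_tendsto
        (tendsto_div_mul_I_zero hσ s))).tendsto_zero_of_tendsto h_quadratic
  have h_sum := h_remainder.add (h_quadratic.div_const 2)
  rw [zero_add] at h_sum
  refine h_sum.congr' (h_cancel.mono fun n hn => ?_)
  simp only [Finset.sum_range_succ, Finset.sum_range_zero, Nat.factorial, ofReal_div, ofReal_mul]
  push_cast
  linear_combination -(σ n : ℂ) * I * hn

lemma tendsto_sqrt_log_natCast : Tendsto (fun n : ℕ => √(Real.log n)) atTop atTop :=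
  Real.tendsto_sqrt_atTop.comp (Real.tendsto_log_atTop.comp tendsto_natCast_atTop_atTop)

lemma tendsto_exp_harmonic_mul_exp_sub_one (s : ℝ) :
    Tendsto (fun n : ℕ => exp ((harmonic n : ℝ) * (exp (((s / √(Real.log n) : ℝ) : ℂ) * I) - 1)) *
      exp ((-(s * √(Real.log n)) : ℝ) * I)) atTop (𝓝 (charFun (gaussianReal 0 1) s)) := by
  have h_error := (continuous_ofReal.tendsto _ |>.comp Real.tendsto_harmonic_sub_log).mul
    ((continuous_exp.tendsto 0).comp (tendsto_div_mul_I_zero tendsto_sqrt_log_natCast s)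
      |>.sub_const 1)
  have h_main := tendsto_sq_mul_exp_sub_one_sub tendsto_sqrt_log_natCast s
  have h_exponent := (continuous_exp.tendsto _).comp (h_error.add h_main)
  rw [charFun_gaussianReal]
  convert h_exponent using 2 with n
  · rw [← exp_add, Function.comp_apply, ← ofReal_pow, Real.sq_sqrt (Real.log_natCast_nonneg n)]
    simp only [Function.comp_apply]
    push_cast
    ring_nf
  · simp [neg_div]

lemma norm_charFun_standardized_cycleLaw_sub_le (n : ℕ) (m : ℝ) {s σ : ℝ}
    (hs : ‖exp (((s / σ : ℝ) : ℂ) * I) - 1‖ ≤ 1) :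
    ‖charFun (standardized (cycleLaw n) m σ) s -
      exp ((harmonic n : ℝ) * (exp (((s / σ : ℝ) : ℂ) * I) - 1)) * exp ((-(s * m / σ) : ℝ) * I)‖ ≤
      ‖exp (((s / σ : ℝ) : ℂ) * I) - 1‖ ^ 2 * 2 := by
  have h_poisson := norm_prod_one_add_mul_sub_exp_le (s := Finset.range n)
    (p := fun j => (j + 1 : ℝ)⁻¹) (fun j _ => by positivity)
    (fun j _ => inv_le_one_of_one_le₀ (by simp)) hs
  rw [sum_range_inv_add_one] at h_poisson
  rw [charFun_standardized, charFun_cycleLaw, ← sub_mul, norm_mul, norm_exp_ofReal_mul_I, mul_one]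
  exact h_poisson.trans (by gcongr; exact sum_range_inv_add_one_sq_le_two n)

lemma tendsto_charFun_standardized_cycleLaw (s : ℝ) :
    Tendsto (fun n : ℕ => charFun (standardized (cycleLaw n) (Real.log n) (√(Real.log n))) s) atTop
      (𝓝 (charFun (gaussianReal 0 1) s)) := by
  have h_norm : Tendsto (fun n : ℕ => ‖exp (((s / √(Real.log n) : ℝ) : ℂ) * I) - 1‖) atTop
      (𝓝 0) := by
    simpa using (((continuous_exp.tendsto 0).comp
      (tendsto_div_mul_I_zero tendsto_sqrt_log_natCast s)).sub_const 1).norm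
  have h_small : ∀ᶠ n : ℕ in atTop, ‖exp (((s / √(Real.log n) : ℝ) : ℂ) * I) - 1‖ ≤ 1 :=
    h_norm.eventually_le_const one_pos
  have h_sub := squeeze_zero_norm'
    (h_small.mono fun n hn => norm_charFun_standardized_cycleLaw_sub_le n (Real.log n) hn)
    (by simpa using (h_norm.pow 2).mul_const 2)
  simpa [mul_div_assoc, Real.div_sqrt] using
    h_sub.add (tendsto_exp_harmonic_mul_exp_sub_one s)

theorem tendstoUniformly_cycleLaw_singleton :
    TendstoUniformly (fun (n : ℕ) (k : ℤ) => √(Real.log n) * (cycleLaw n).real {k} -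
      gaussianPDFReal 0 1 ((k - Real.log n) / √(Real.log n))) 0 atTop := by
  have h_integrable : Integrable fun s : ℝ => Real.exp (4 - 2 / π ^ 2 * s ^ 2) := by
    simp only [sub_eq_add_neg, Real.exp_add, ← neg_mul]
    exact (integrable_exp_neg_mul_sq (by positivity)).const_mul _
  exact tendstoUniformly_measureReal_singleton tendsto_sqrt_log_natCast
    tendsto_charFun_standardized_cycleLaw h_integrable
    (.of_forall fun _ _ => norm_charFun_standardized_cycleLaw_le)
    (integral_charFun_gaussianReal_mul_exp 0 one_ne_zero)

theorem tendsto_integral_cycleLaw_singleton_pow (m : ℕ) :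
    Tendsto (fun n : ℕ => ∫ k, (√(Real.log n) * (cycleLaw n).real {k}) ^ m ∂cycleLaw n) atTop
      (𝓝 ((√(2 * π))⁻¹ ^ m * (√(m + 1))⁻¹)) := by
  have h := tendsto_integral_measureReal_singleton_pow (continuous_gaussianPDFReal 0 1)
    (norm_gaussianPDFReal_le 0 1) tendsto_charFun_standardized_cycleLaw
    tendstoUniformly_cycleLaw_singleton m
  simpa only [integral_gaussianPDFReal_pow_gaussianReal 0 one_ne_zero, NNReal.coe_one,
    mul_one] using h

end CycleLawAsymptotics

theorem stmt_7 (r : ℕ) (hr : 2 ≤ r) :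
    Filter.Tendsto (fun n : ℕ => Er r n * (Real.log n) ^ (((r : ℝ) - 1) / 2))
      Filter.atTop
      (nhds (1 / ((2 * Real.pi) ^ (((r : ℝ) - 1) / 2) * Real.sqrt r))) := by
  obtain ⟨m, rfl⟩ : ∃ m, r = m + 1 := Nat.exists_eq_add_one.2 (zero_lt_two.trans_le hr)
  have h_exponent : (((m + 1 : ℕ) : ℝ) - 1) / 2 = m / 2 := by
    rw [Nat.cast_add_one, add_sub_cancel_right]
  rw [h_exponent, Real.rpow_div_two_eq_sqrt _ Real.two_pi_pos.le, Real.rpow_natCast,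
    Nat.cast_add_one, one_div, mul_inv, ← inv_pow]
  refine (tendsto_integral_cycleLaw_singleton_pow m).congr fun n => ?_
  rw [Real.rpow_div_two_eq_sqrt _ (Real.log_natCast_nonneg n), Real.rpow_natCast, Er_add_one,
    mul_comm, ← MeasureTheory.integral_const_mul]
  simp only [mul_pow]
end

section
/- Fix an integer r ≥ 2. For L > 0 define J_r(L) := (1/(2π)^{r−1}) ∫_{[−π,π]^{r−1}} g_L(t_1) ⋯ g_L(t_{r−1}) · g_L(−(t_1 + … + t_{r−1})) dt_1 … dt_{r−1}, where g_L(t) := e^{L(e^{it} − 1)} / Γ(e^{it}) (with 1/Γ the entire reciprocal Gamma function). Then L^{(r−1)/2} · J_r(L) → c_r as L → ∞, where c_r = 1 / ((2π)^{(r−1)/2} · √r); that is, J_r(L) ∼ c_r / L^{(r−1)/2}. -/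
open MeasureTheory

/-- `g_L(t) = e^{L(e^{it} - 1)} / Γ(e^{it})`.  (Since Mathlib's `Complex.Gamma`
vanishes at the poles `0, -1, -2, …`, the quotient coincides with the product of
`e^{L(e^{it}-1)}` with the entire reciprocal Gamma function evaluated at `e^{it}`.) -/
noncomputable def gFun (L t : ℝ) : ℂ :=
  Complex.exp ((L : ℂ) * (Complex.exp ((t : ℂ) * Complex.I) - 1)) /
    Complex.Gamma (Complex.exp ((t : ℂ) * Complex.I))

/-- `J_r(L)`: the value at `0` of the `r`-fold convolution of the `2π`-periodic
function `g_L` with itself, written as an integral over the cube `[-π,π]^{r-1}`. -/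
noncomputable def Jr (r : ℕ) (L : ℝ) : ℂ :=
  ((1 / (2 * Real.pi) ^ (r - 1) : ℝ) : ℂ) *
    ∫ t : Fin (r - 1) → ℝ in Set.univ.pi fun _ => Set.Icc (-Real.pi) Real.pi,
      (∏ j, gFun L (t j)) * gFun L (-(∑ j, t j))

/-!
Write `g_L(t) = e^{iLt} k_L(t)`. The angles `t₁, …, t_{r-1}, -(t₁ + ⋯ + t_{r-1})` sum to zero, so
the oscillating factors cancel and every `g_L` may be replaced by `k_L`. Now `k_L(s / √L)` tends to
`e^{-s²/2} / Γ(1) = √(2π) φ(s)`, where `φ` is the standard normal density, and for `|t| ≤ π` it is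
dominated by a Gaussian because `cos t - 1 ≤ -2t²/π²`. After the rescaling `t = s / √L`, dominated
convergence gives `(2π)^{r/2}` times the `r`-fold convolution of `φ` at `0`, which is the density
of `N(0, r)` at `0`, namely `1 / √(2πr)`.
-/

open Filter ProbabilityTheory
open scoped NNReal Topology Real

-- Completing the square in `y`: the second factor is the conditional density given the sum `x`.
lemma gaussianPDFReal_mul_gaussianPDFReal_sub (m₁ m₂ : ℝ) {v₁ v₂ : ℝ≥0} (hv₁ : v₁ ≠ 0)
    (hv₂ : v₂ ≠ 0) (x y : ℝ) :
    gaussianPDFReal m₁ v₁ y * gaussianPDFReal m₂ v₂ (x - y) =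
      gaussianPDFReal (m₁ + m₂) (v₁ + v₂) x *
        gaussianPDFReal (m₁ + v₁ / (v₁ + v₂) * (x - (m₁ + m₂))) (v₁ * v₂ / (v₁ + v₂)) y := by
  simp only [gaussianPDFReal, NNReal.coe_div, NNReal.coe_mul, NNReal.coe_add]
  rw [mul_mul_mul_comm, mul_mul_mul_comm (√(2 * π * (v₁ + v₂)))⁻¹, ← Real.exp_add,
    ← Real.exp_add, ← mul_inv, ← mul_inv, ← Real.sqrt_mul (by positivity),
    ← Real.sqrt_mul (by positivity)]
  congr 2
  · field_simp
  · field_simp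
    ring

lemma integral_gaussianPDFReal_mul_gaussianPDFReal_sub (m₁ m₂ : ℝ) {v₁ v₂ : ℝ≥0}
    (hv₁ : v₁ ≠ 0) (hv₂ : v₂ ≠ 0) (x : ℝ) :
    ∫ y, gaussianPDFReal m₁ v₁ y * gaussianPDFReal m₂ v₂ (x - y) =
      gaussianPDFReal (m₁ + m₂) (v₁ + v₂) x := by
  simp_rw [gaussianPDFReal_mul_gaussianPDFReal_sub m₁ m₂ hv₁ hv₂]
  rw [integral_const_mul, integral_gaussianPDFReal_eq_one _ (by positivity), mul_one]

lemma gaussianPDFReal_le (m : ℝ) (v : ℝ≥0) (x : ℝ) :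
    gaussianPDFReal m v x ≤ (√(2 * π * v))⁻¹ :=
  mul_le_of_le_one_right (by positivity) <| Real.exp_le_one_iff.mpr <|
    div_nonpos_of_nonpos_of_nonneg (neg_nonpos.mpr (sq_nonneg _)) (by positivity)

lemma integrable_prod_gaussianPDFReal_mul_sub_sum {ι : Type*} [Fintype ι] (m : ι → ℝ)
    (v : ι → ℝ≥0) (m₀ : ℝ) (v₀ : ℝ≥0) (x : ℝ) :
    Integrable fun s : ι → ℝ ↦
      (∏ j, gaussianPDFReal (m j) (v j) (s j)) * gaussianPDFReal m₀ v₀ (x - ∑ j, s j) := by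
  refine (Integrable.fintype_prod fun j ↦ integrable_gaussianPDFReal (m j) (v j)).mul_bdd
    (c := (√(2 * π * v₀))⁻¹) (Measurable.aestronglyMeasurable <| by fun_prop)
    (ae_of_all _ fun s ↦ ?_)
  rw [Real.norm_of_nonneg (gaussianPDFReal_nonneg _ _ _)]
  exact gaussianPDFReal_le _ _ _

lemma integral_fin_succ_eq_integral_integral_cons {X E : Type*} [MeasureSpace X]
    [SigmaFinite (volume : Measure X)] [NormedAddCommGroup E] [NormedSpace ℝ E] {n : ℕ}
    {f : (Fin (n + 1) → X) → E} (hf : Integrable f) :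
    ∫ s, f s = ∫ s : Fin n → X, ∫ y, f (Fin.cons y s) := by
  have hsplit := (volume_preserving_piFinSuccAbove (fun _ : Fin (n + 1) ↦ X) 0).symm
  rw [← hsplit.integral_comp', Measure.volume_eq_prod]
  refine (integral_prod_symm _ (hsplit.integrable_comp_of_integrable hf)).trans ?_
  simp only [Function.comp_apply, MeasurableEquiv.piFinSuccAbove_symm_apply,
    Fin.insertNthEquiv_zero]
  rfl

theorem integral_prod_gaussianPDFReal_mul_sub_sum {n : ℕ} (m : Fin n → ℝ) {v : Fin n → ℝ≥0}
    (hv : ∀ j, v j ≠ 0) (m₀ : ℝ) {v₀ : ℝ≥0} (hv₀ : v₀ ≠ 0) (x : ℝ) :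
    ∫ s : Fin n → ℝ,
        (∏ j, gaussianPDFReal (m j) (v j) (s j)) * gaussianPDFReal m₀ v₀ (x - ∑ j, s j) =
      gaussianPDFReal (∑ j, m j + m₀) (∑ j, v j + v₀) x := by
  induction n generalizing m₀ v₀ with
  | zero => simp [measureReal_def, volume_pi]
  | succ n ih =>
    rw [integral_fin_succ_eq_integral_integral_cons
      (integrable_prod_gaussianPDFReal_mul_sub_sum m v m₀ v₀ x)]
    calc ∫ s : Fin n → ℝ, ∫ y, (∏ j, gaussianPDFReal (m j) (v j) (Fin.cons y s j)) *
            gaussianPDFReal m₀ v₀ (x - ∑ j, Fin.cons y s j)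
        = ∫ s : Fin n → ℝ, (∏ j : Fin n, gaussianPDFReal (m j.succ) (v j.succ) (s j)) *
            gaussianPDFReal (m 0 + m₀) (v 0 + v₀) (x - ∑ j, s j) := by
          congr with s
          simp_rw [← integral_gaussianPDFReal_mul_gaussianPDFReal_sub (m 0) m₀ (hv 0) hv₀,
            ← integral_const_mul, Fin.prod_univ_succ, Fin.sum_univ_succ, Fin.cons_zero,
            Fin.cons_succ]
          congr with y
          ring_nf
      _ = gaussianPDFReal (∑ j, m j + m₀) (∑ j, v j + v₀) x := by
          rw [ih (fun j ↦ m j.succ) (fun j ↦ hv j.succ) (m 0 + m₀) (by positivity)]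
          simp only [Fin.sum_univ_succ]
          congr 1 <;> ring

section Rescaling

variable {α : Type*} {l : Filter α} [l.IsCountablyGenerated] {ρ : α → ℝ}

theorem tendsto_pow_finrank_smul_setIntegral {E F : Type*} [NormedAddCommGroup E]
    [NormedSpace ℝ E] [FiniteDimensional ℝ E] [MeasurableSpace E] [BorelSpace E]
    [NormedAddCommGroup F] [NormedSpace ℝ F] {μ : Measure E} [μ.IsAddHaarMeasure]
    {f : α → E → F} {g : E → F} {bound : E → ℝ} {S : Set E} (hρ : Tendsto ρ l atTop)
    (hS : MeasurableSet S) (hS₀ : S ∈ 𝓝 0) (hf : ∀ᶠ a in l, StronglyMeasurable (f a))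
    (hbound : ∀ᶠ a in l, ∀ s, (ρ a)⁻¹ • s ∈ S → ‖f a ((ρ a)⁻¹ • s)‖ ≤ bound s)
    (hint : Integrable bound μ)
    (hlim : ∀ s, Tendsto (fun a ↦ f a ((ρ a)⁻¹ • s)) l (𝓝 (g s))) :
    Tendsto (fun a ↦ ρ a ^ Module.finrank ℝ E • ∫ t in S, f a t ∂μ) l (𝓝 (∫ s, g s ∂μ)) := by
  have hrescaled : Tendsto (fun a ↦ ∫ s, S.indicator (f a) ((ρ a)⁻¹ • s) ∂μ) l
      (𝓝 (∫ s, g s ∂μ)) := by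
    refine tendsto_integral_filter_of_dominated_convergence (fun s ↦ ‖bound s‖) ?_ ?_ hint.norm
      (ae_of_all _ fun s ↦ ?_)
    · filter_upwards [hf] with a ha
      exact ((ha.indicator hS).comp_measurable (measurable_const_smul _)).aestronglyMeasurable
    · filter_upwards [hbound] with a ha
      refine ae_of_all _ fun s ↦ ?_
      by_cases hs : (ρ a)⁻¹ • s ∈ S
      · rw [Set.indicator_of_mem hs]
        exact (ha s hs).trans (le_abs_self _)
      · simp only [Set.indicator_of_notMem hs, norm_zero, norm_nonneg]
    · have hzero : Tendsto (fun a ↦ (ρ a)⁻¹ • s) l (𝓝 0) := by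
        simpa only [Pi.inv_apply, zero_smul] using hρ.inv_tendsto_atTop.smul_const s
      refine (hlim s).congr' ?_
      filter_upwards [hzero hS₀] with a ha
      exact (Set.indicator_of_mem (Set.mem_preimage.mp ha) (f a)).symm
  refine hrescaled.congr' ?_
  filter_upwards [hρ.eventually_ge_atTop 0] with a ha
  rw [Measure.integral_comp_inv_smul_of_nonneg μ _ ha, integral_indicator hS]

theorem tendsto_pow_mul_setIntegral_cube_prod_mul_neg_sum {ψ : α → ℝ → ℂ} {g : ℝ → ℂ}
    {bound : ℝ → ℝ} {R C : ℝ} (n : ℕ) (hρ : Tendsto ρ l atTop) (hR : 0 < R)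
    (hψ : ∀ᶠ a in l, Measurable (ψ a)) (hC : ∀ᶠ a in l, ∀ t, ‖ψ a t‖ ≤ C)
    (hbound : ∀ᶠ a in l, ∀ s, |(ρ a)⁻¹ * s| ≤ R → ‖ψ a ((ρ a)⁻¹ * s)‖ ≤ bound s)
    (hint : Integrable bound) (hlim : ∀ s, Tendsto (fun a ↦ ψ a ((ρ a)⁻¹ * s)) l (𝓝 (g s))) :
    Tendsto (fun a ↦ (ρ a : ℂ) ^ n * ∫ t : Fin n → ℝ in Set.univ.pi fun _ ↦ Set.Icc (-R) R,
        (∏ j, ψ a (t j)) * ψ a (-∑ j, t j)) l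
      (𝓝 (∫ s : Fin n → ℝ, (∏ j, g (s j)) * g (-∑ j, s j))) := by
  have hcube : (Set.univ.pi fun _ : Fin n ↦ Set.Icc (-R) R) ∈ 𝓝 0 :=
    set_pi_mem_nhds Set.finite_univ fun _ _ ↦ Icc_mem_nhds (neg_neg_of_pos hR) hR
  have hscaled := tendsto_pow_finrank_smul_setIntegral (μ := volume)
    (f := fun a (t : Fin n → ℝ) ↦ (∏ j, ψ a (t j)) * ψ a (-∑ j, t j))
    (g := fun s ↦ (∏ j, g (s j)) * g (-∑ j, s j)) (bound := fun s ↦ (∏ j, bound (s j)) * C)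
    hρ (.univ_pi fun _ ↦ measurableSet_Icc) hcube ?_ ?_
    ((Integrable.fintype_prod fun _ ↦ hint).mul_const C) fun s ↦ ?_
  · simpa only [Module.finrank_fin_fun, Complex.real_smul, Complex.ofReal_pow] using hscaled
  · filter_upwards [hψ] with a ha
    exact Measurable.stronglyMeasurable (by fun_prop)
  · filter_upwards [hbound, hC] with a ha hCa s hs
    rw [norm_mul, norm_prod]
    have hs' (j) : ‖ψ a ((ρ a)⁻¹ * s j)‖ ≤ bound (s j) :=
      ha _ (abs_le.mpr (hs j (Set.mem_univ j)))
    refine mul_le_mul (Finset.prod_le_prod (fun _ _ ↦ norm_nonneg _) fun j _ ↦ hs' j) (hCa _)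
      (norm_nonneg _) (Finset.prod_nonneg fun j _ ↦ (norm_nonneg _).trans (hs' j))
  · simp only [Pi.smul_apply, smul_eq_mul, ← Finset.mul_sum, ← mul_neg]
    exact (tendsto_finsetProd _ fun j _ ↦ hlim (s j)).mul (hlim _)

end Rescaling

/-- The kernel `e^{L(e^{it} - 1)} a(t)` with its fast oscillation `e^{iLt}` divided out, so that
near `t = 0` it is approximately the Gaussian `e^{-Lt²/2} a(0)`. -/
noncomputable def centeredKernel (a : ℝ → ℂ) (L t : ℝ) : ℂ :=
  Complex.exp (L * (Complex.exp (t * Complex.I) - 1 - t * Complex.I)) * a t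

section CenteredKernel

variable {a : ℝ → ℂ} {C L t : ℝ}

lemma norm_centeredKernel (a : ℝ → ℂ) (L t : ℝ) :
    ‖centeredKernel a L t‖ = Real.exp (L * (Real.cos t - 1)) * ‖a t‖ := by
  simp [centeredKernel, Complex.norm_exp, Complex.exp_ofReal_mul_I_re]

lemma norm_centeredKernel_le (hL : 0 ≤ L) (ha : ‖a t‖ ≤ C) : ‖centeredKernel a L t‖ ≤ C := by
  rw [norm_centeredKernel]
  refine (mul_le_of_le_one_left (norm_nonneg _) (Real.exp_le_one_iff.mpr ?_)).trans ha
  exact mul_nonpos_of_nonneg_of_nonpos hL (sub_nonpos.mpr (Real.cos_le_one t))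

lemma norm_centeredKernel_le_exp_neg_sq (hL : 0 ≤ L) (ha : ‖a t‖ ≤ C) (ht : |t| ≤ π) :
    ‖centeredKernel a L t‖ ≤ Real.exp (-(2 / π ^ 2) * (L * t ^ 2)) * C := by
  rw [norm_centeredKernel]
  refine mul_le_mul (Real.exp_le_exp.mpr ?_) ha (norm_nonneg _) (Real.exp_nonneg _)
  calc L * (Real.cos t - 1) ≤ L * (1 - 2 / π ^ 2 * t ^ 2 - 1) := by
        gcongr
        exact Real.cos_le_one_sub_mul_cos_sq ht
    _ = -(2 / π ^ 2) * (L * t ^ 2) := by ring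

lemma measurable_centeredKernel (ha : Measurable a) : Measurable (centeredKernel a L) := by
  unfold centeredKernel
  fun_prop

lemma tendsto_mul_exp_inv_sqrt_mul_sub_one_sub (z : ℂ) :
    Tendsto (fun L : ℝ ↦ (L : ℂ) *
        (Complex.exp ((√L : ℂ)⁻¹ * z) - 1 - (√L : ℂ)⁻¹ * z)) atTop (𝓝 (z ^ 2 / 2)) := by
  have hzero : Tendsto (fun L : ℝ ↦ (√L : ℂ)⁻¹ * z) atTop (𝓝 0) := by
    simpa using (tendsto_inv_atTop_zero.comp Real.tendsto_sqrt_atTop).ofReal.mul_const z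
  have hremainder := (Complex.exp_sub_sum_range_succ_isLittleO_pow 2).comp_tendsto hzero
  have hscale : (fun L : ℝ ↦ (L : ℂ) * ((√L : ℂ)⁻¹ * z) ^ 2) =ᶠ[atTop] fun _ ↦ z ^ 2 := by
    filter_upwards [eventually_gt_atTop 0] with L hL
    have hsq : (√L : ℂ) ^ 2 = L := by exact_mod_cast Real.sq_sqrt hL.le
    have hL₀ : (L : ℂ) ≠ 0 := by exact_mod_cast hL.ne'
    rw [mul_pow, inv_pow, hsq, mul_inv_cancel_left₀ hL₀]
  -- The second-order Taylor remainder at `z / √L` is `o((z / √L)²)`, and `L (z / √L)² = z²`.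
  have hsmall := ((Asymptotics.isBigO_refl (fun L : ℝ ↦ (L : ℂ)) atTop).mul_isLittleO
    hremainder).trans_eventuallyEq hscale |>.trans_isBigO
      (Asymptotics.isBigO_const_const (z ^ 2) (one_ne_zero (α := ℂ)) _)
  rw [← zero_add (z ^ 2 / 2)]
  refine ((Asymptotics.isLittleO_one_iff ℂ).mp hsmall |>.add_const (z ^ 2 / 2)).congr' ?_
  filter_upwards [hscale] with L hL
  simp only [Function.comp_apply, Finset.sum_range_succ, Finset.sum_range_zero, Nat.factorial]
  push_cast
  linear_combination -(1 / 2 : ℂ) * hL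

lemma tendsto_centeredKernel_inv_sqrt_mul (ha : ContinuousAt a 0) (s : ℝ) :
    Tendsto (fun L ↦ centeredKernel a L ((√L)⁻¹ * s)) atTop
      (𝓝 (√(2 * π) * a 0 * gaussianPDFReal 0 1 s)) := by
  have hzero : Tendsto (fun L ↦ (√L)⁻¹ * s) atTop (𝓝 0) := by
    simpa using (tendsto_inv_atTop_zero.comp Real.tendsto_sqrt_atTop).mul_const s
  have hexp := ((tendsto_mul_exp_inv_sqrt_mul_sub_one_sub (s * Complex.I)).cexp).mul
    (ha.tendsto.comp hzero)
  have hgauss : Complex.exp ((s * Complex.I) ^ 2 / 2) * a 0 =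
      √(2 * π) * a 0 * gaussianPDFReal 0 1 s := by
    have hpdf : √(2 * π) * gaussianPDFReal 0 1 s = Real.exp (-s ^ 2 / 2) := by
      have hsqrt : √(2 * π) ≠ 0 := by positivity
      simp only [gaussianPDFReal, NNReal.coe_one, mul_one, sub_zero, mul_inv_cancel_left₀ hsqrt]
    rw [mul_right_comm, ← Complex.ofReal_mul, hpdf, mul_pow, Complex.I_sq]
    push_cast
    ring_nf
  rw [← hgauss]
  refine hexp.congr fun L ↦ ?_
  simp [centeredKernel, mul_assoc]

theorem tendsto_sqrt_pow_mul_setIntegral_centeredKernel (n : ℕ) (ha : Measurable a)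
    (ha₀ : ContinuousAt a 0) (hC : ∀ t, ‖a t‖ ≤ C) :
    Tendsto (fun L ↦ (√L : ℂ) ^ n * ∫ t : Fin n → ℝ in Set.univ.pi fun _ ↦ Set.Icc (-π) π,
        (∏ j, centeredKernel a L (t j)) * centeredKernel a L (-∑ j, t j)) atTop
      (𝓝 ((√(2 * π) * a 0) ^ (n + 1) * gaussianPDFReal 0 (n + 1) 0)) := by
  have hlimit := tendsto_pow_mul_setIntegral_cube_prod_mul_neg_sum n Real.tendsto_sqrt_atTop
    Real.pi_pos (.of_forall fun L ↦ measurable_centeredKernel (L := L) ha)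
    (eventually_ge_atTop 0 |>.mono fun L hL t ↦ norm_centeredKernel_le hL (hC t))
    (bound := fun s ↦ Real.exp (-(2 / π ^ 2) * s ^ 2) * C) ?_
    ((integrable_exp_neg_mul_sq (by positivity)).mul_const C)
    (tendsto_centeredKernel_inv_sqrt_mul ha₀)
  · convert hlimit using 2
    have hconv := integral_prod_gaussianPDFReal_mul_sub_sum (fun _ : Fin n ↦ 0)
      (v := fun _ ↦ 1) (fun _ ↦ one_ne_zero) 0 one_ne_zero 0
    simp only [Finset.sum_const_zero, add_zero, Finset.sum_const, Finset.card_univ,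
      Fintype.card_fin, nsmul_one, zero_sub] at hconv
    rw [← hconv, ← integral_complex_ofReal, ← integral_const_mul]
    congr with s
    rw [Finset.prod_mul_distrib, Finset.prod_const, Finset.card_univ, Fintype.card_fin]
    push_cast
    ring
  · filter_upwards [eventually_gt_atTop 0] with L hL s hs
    have hscale : L * ((√L)⁻¹ * s) ^ 2 = s ^ 2 := by
      rw [mul_pow, inv_pow, Real.sq_sqrt hL.le, mul_inv_cancel_left₀ hL.ne']
    simpa only [hscale] using norm_centeredKernel_le_exp_neg_sq hL.le (hC _) hs

end CenteredKernel

/-- The entire function `1/Γ` restricted to the unit circle, as a function of the angle. At the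
pole `-1` of `Γ` its value `0` comes from the conventions `Complex.Gamma (-1) = 0` and
`0⁻¹ = 0`. -/
noncomputable def circleInvGamma (t : ℝ) : ℂ :=
  (Complex.Gamma (Complex.exp (t * Complex.I)))⁻¹

lemma circleInvGamma_zero : circleInvGamma 0 = 1 := by
  simp [circleInvGamma]

lemma continuous_circleInvGamma : Continuous circleInvGamma :=
  Complex.differentiable_one_div_Gamma.continuous.comp
    (f := fun t : ℝ ↦ Complex.exp (t * Complex.I)) (by fun_prop)

lemma exists_norm_circleInvGamma_le : ∃ C, ∀ t, ‖circleInvGamma t‖ ≤ C := by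
  obtain ⟨C, hC⟩ := (isCompact_sphere (0 : ℂ) 1).exists_bound_of_continuousOn
    Complex.differentiable_one_div_Gamma.continuous.continuousOn
  exact ⟨C, fun t ↦ hC _ (by simp)⟩

lemma gFun_eq_exp_mul_centeredKernel (L t : ℝ) :
    gFun L t = Complex.exp (L * Complex.I * t) * centeredKernel circleInvGamma L t := by
  rw [gFun, centeredKernel, circleInvGamma, div_eq_mul_inv, ← mul_assoc, ← Complex.exp_add]
  ring_nf

lemma prod_exp_mul_mul_exp_neg_sum_mul {ι : Type*} [Fintype ι] (c : ℂ) (f : ℝ → ℂ) (t : ι → ℝ) :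
    (∏ j, Complex.exp (c * t j) * f (t j)) *
        (Complex.exp (c * (-∑ j, t j : ℝ)) * f (-∑ j, t j)) =
      (∏ j, f (t j)) * f (-∑ j, t j) := by
  rw [Finset.prod_mul_distrib, mul_mul_mul_comm, ← Complex.exp_sum, ← Complex.exp_add,
    ← Finset.mul_sum, Complex.ofReal_neg, Complex.ofReal_sum, mul_neg, add_neg_cancel,
    Complex.exp_zero, one_mul]

lemma Jr_succ (n : ℕ) (L : ℝ) :
    Jr (n + 1) L = ((1 / (2 * π) ^ n : ℝ) : ℂ) *
      ∫ t : Fin n → ℝ in Set.univ.pi fun _ ↦ Set.Icc (-π) π,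
        (∏ j, centeredKernel circleInvGamma L (t j)) *
          centeredKernel circleInvGamma L (-∑ j, t j) := by
  simp only [Jr, gFun_eq_exp_mul_centeredKernel, prod_exp_mul_mul_exp_neg_sum_mul]
  rfl

lemma one_div_two_pi_pow_mul_gaussianPDFReal_zero (n : ℕ) :
    1 / (2 * π) ^ n * (√(2 * π) ^ (n + 1) * gaussianPDFReal 0 (n + 1) 0) =
      1 / (√(2 * π) ^ n * √(n + 1 : ℕ)) := by
  have hsqrt : √(2 * π) ≠ 0 := by positivity
  have hsq : (2 * π) ^ n = √(2 * π) ^ n * √(2 * π) ^ n := by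
    rw [← mul_pow, Real.mul_self_sqrt (by positivity)]
  have hpdf : gaussianPDFReal 0 (n + 1) 0 = (√(2 * π) * √(n + 1 : ℕ))⁻¹ := by
    rw [← Real.sqrt_mul (by positivity)]
    simp [gaussianPDFReal]
  rw [hpdf, hsq]
  field_simp
  ring

theorem stmt_8 (r : ℕ) (hr : 2 ≤ r) :
    Filter.Tendsto (fun L : ℝ => ((L ^ (((r : ℝ) - 1) / 2) : ℝ) : ℂ) * Jr r L)
      Filter.atTop
      (nhds (((1 / ((2 * Real.pi) ^ (((r : ℝ) - 1) / 2) * Real.sqrt r) : ℝ) : ℂ)) ) := by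
  obtain ⟨n, rfl⟩ : ∃ n, r = n + 1 := Nat.exists_eq_add_one.mpr (by omega)
  have hpow {x : ℝ} (hx : 0 ≤ x) : x ^ ((((n + 1 : ℕ) : ℝ) - 1) / 2) = √x ^ n := by
    rw [Real.rpow_div_two_eq_sqrt _ hx, Nat.cast_succ, add_sub_cancel_right, Real.rpow_natCast]
  obtain ⟨C, hC⟩ := exists_norm_circleInvGamma_le
  have hlimit := (tendsto_sqrt_pow_mul_setIntegral_centeredKernel n
    continuous_circleInvGamma.measurable continuous_circleInvGamma.continuousAt hC).const_mul
      ((1 / (2 * π) ^ n : ℝ) : ℂ)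
  rw [circleInvGamma_zero, mul_one] at hlimit
  rw [hpow (by positivity), ← one_div_two_pi_pow_mul_gaussianPDFReal_zero]
  simp only [Complex.ofReal_mul _ (_ * _), Complex.ofReal_mul (_ ^ (n + 1)), Complex.ofReal_pow]
  refine hlimit.congr' ?_
  filter_upwards [eventually_ge_atTop 0] with L hL
  rw [hpow hL, Jr_succ, Complex.ofReal_pow, mul_left_comm]
end

section
/- Fix an integer r ≥ 2. The series A_r := Σ_{m=0}^∞ W_r(m) converges, and n^r · W_r(n) → A_r as n → ∞; that is, W_r(n) ∼ A_r / n^r. -/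
/-- The cycle structure of a permutation of `n` letters: the multiset of the lengths
of its disjoint cycles, including fixed points. -/
def cycleStruct {n : ℕ} (σ : Equiv.Perm (Fin n)) : Multiset ℕ :=
  σ.cycleType + Multiset.replicate (n - σ.cycleType.sum) 1

/-- W_r(n): the probability that `r` independent uniformly random permutations of `n`
letters all have the same cycle structure (note `W r 0 = 1`). -/
noncomputable def W (r n : ℕ) : ℝ :=
  (Nat.card {v : Fin r → Equiv.Perm (Fin n) //
      ∀ i j, cycleStruct (v i) = cycleStruct (v j)} : ℝ) / (n.factorial : ℝ) ^ r

/-!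
A partition `λ` of `n` is the cycle structure of a permutation with probability `1 / z_λ`, where
`z_λ = ∏ j ^ λ_j * λ_j !`, so `W r n = ∑_{λ ⊢ n} z_λ⁻¹ ^ r` and `∑ n, W r n` is the sum of
`z_μ⁻¹ ^ r` over all finite multisets `μ` of positive integers.
Removing the largest part of `λ ⊢ n` turns `n ^ r * W r n` into a sum over multisets `μ` of
`(n * z_λ⁻¹) ^ r`, where `λ` is `μ` with the part `n - |μ|` adjoined.
For fixed `μ` and large `n` the adjoined part is not in `μ`, hence
`n * z_λ⁻¹ = n / (n - |μ|) * z_μ⁻¹ → z_μ⁻¹`.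
Since the largest part is at least the average, `n ≤ (n - |μ|) * (1 + card μ)`, the terms are
dominated by `(2 ^ card μ * z_μ⁻¹) ^ r`, and the multinomial theorem shows that these are summable:
a sum over multisets of `∏ y_j ^ μ_j / μ_j !` equals `exp (∑ y_j)`.
The claim follows by dominated convergence.
-/

open Filter Finset Topology
open scoped Nat

section ProdCountFactorial

variable {α : Type*} [DecidableEq α]

/-- The product `∏ a, (multiplicity of a in μ)!`: the number of ways to permute the entries of a
list without changing it, when `μ` is the multiset of its entries. -/
def prodCountFactorial (μ : Multiset α) : ℕ := ∏ a ∈ μ.toFinset, (μ.count a)!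

lemma prodCountFactorial_pos (μ : Multiset α) : 0 < prodCountFactorial μ :=
  prod_pos fun _ _ => Nat.factorial_pos _

lemma prodCountFactorial_eq_of_subset {μ : Multiset α} {s : Finset α} (h : μ.toFinset ⊆ s) :
    prodCountFactorial μ = ∏ a ∈ s, (μ.count a)! := by
  refine prod_subset h fun a _ ha => ?_
  rw [Multiset.count_eq_zero_of_notMem (mt Multiset.mem_toFinset.2 ha), Nat.factorial_zero]

lemma prodCountFactorial_cons (a : α) (μ : Multiset α) :
    prodCountFactorial (a ::ₘ μ) = (μ.count a + 1) * prodCountFactorial μ := by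
  have hrest : ∏ b ∈ μ.toFinset.erase a, ((a ::ₘ μ).count b)! =
      ∏ b ∈ μ.toFinset.erase a, (μ.count b)! :=
    prod_congr rfl fun b hb => by rw [Multiset.count_cons_of_ne (ne_of_mem_erase hb)]
  rw [prodCountFactorial, prodCountFactorial_eq_of_subset (subset_insert a μ.toFinset),
    Multiset.toFinset_cons, ← mul_prod_erase _ _ (mem_insert_self _ _),
    ← mul_prod_erase _ _ (mem_insert_self _ _), erase_insert_eq_erase, hrest,
    Multiset.count_cons_self, Nat.factorial_succ, mul_assoc]

lemma prodCountFactorial_add_replicate {μ : Multiset α} {a : α} (ha : a ∉ μ) (k : ℕ) :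
    prodCountFactorial (μ + Multiset.replicate k a) = k ! * prodCountFactorial μ := by
  induction k with
  | zero => simp
  | succ k ih =>
    rw [Multiset.replicate_succ, Multiset.add_cons, prodCountFactorial_cons, ih,
      Multiset.count_add, Multiset.count_eq_zero_of_notMem ha, Multiset.count_replicate_self,
      zero_add, Nat.factorial_succ, mul_assoc]

lemma prodCountFactorial_mul_countPerms (μ : Multiset α) :
    prodCountFactorial μ * μ.countPerms = μ.card ! := by
  rw [← Multiset.toFinset_sum_count_eq]
  exact Nat.multinomial_spec μ.toFinset μ.count

lemma sum_sym_prod_map_div_prodCountFactorial {K : Type*} [Field K] [CharZero K] (y : α → K)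
    (s : Finset α) (n : ℕ) :
    ∑ k ∈ s.sym n, (k.1.map y).prod / prodCountFactorial k.1 = (∑ a ∈ s, y a) ^ n / n ! := by
  rw [sum_pow y, sum_div]
  refine sum_congr rfl fun k _ => ?_
  have hk : (prodCountFactorial k.1 * k.1.countPerms : K) = n ! := by
    exact_mod_cast k.2 ▸ prodCountFactorial_mul_countPerms k.1
  have hne : (prodCountFactorial k.1 : K) ≠ 0 := Nat.cast_ne_zero.2 (prodCountFactorial_pos _).ne'
  rw [div_eq_div_iff hne (Nat.cast_ne_zero.2 n.factorial_ne_zero), ← hk]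
  ring

theorem summable_prod_map_div_prodCountFactorial {y : α → ℝ} (hy₀ : ∀ a, 0 ≤ y a)
    (hy : Summable y) :
    Summable fun μ : Multiset α => (μ.map y).prod / prodCountFactorial μ := by
  have hterm (μ : Multiset α) : 0 ≤ (μ.map y).prod / prodCountFactorial μ :=
    div_nonneg (Multiset.prod_nonneg (by simpa using fun a _ => hy₀ a)) (Nat.cast_nonneg _)
  refine summable_of_sum_le hterm (c := Real.exp (∑' a, y a)) fun S => ?_
  set J : Finset α := S.biUnion Multiset.toFinset
  set K : ℕ := S.sup Multiset.card + 1
  have hcard : ∀ μ ∈ S, μ.card ∈ range K := fun μ hμ =>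
    mem_range.2 (Nat.lt_succ_of_le (le_sup (f := Multiset.card) hμ))
  have hsub (n : ℕ) : {μ ∈ S | μ.card = n} ⊆ (J.sym n).map (.subtype _) := by
    intro μ hμ
    obtain ⟨hμS, rfl⟩ := mem_filter.1 hμ
    refine mem_map.2 ⟨⟨μ, rfl⟩, mem_sym_iff.2 fun a ha => ?_, rfl⟩
    exact mem_biUnion.2 ⟨μ, hμS, Multiset.mem_toFinset.2 ha⟩
  calc ∑ μ ∈ S, (μ.map y).prod / prodCountFactorial μ
      = ∑ n ∈ range K, ∑ μ ∈ S with μ.card = n, (μ.map y).prod / prodCountFactorial μ :=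
        (sum_fiberwise_of_maps_to hcard _).symm
    _ ≤ ∑ n ∈ range K, ∑ μ ∈ (J.sym n).map (.subtype _),
          (μ.map y).prod / prodCountFactorial μ :=
        sum_le_sum fun n _ => sum_le_sum_of_subset_of_nonneg (hsub n) fun μ _ _ => hterm μ
    _ = ∑ n ∈ range K, (∑ a ∈ J, y a) ^ n / n ! := by
        refine sum_congr rfl fun n _ => ?_
        rw [← sum_sym_prod_map_div_prodCountFactorial]
        exact sum_map _ _ _
    _ ≤ Real.exp (∑ a ∈ J, y a) := Real.sum_le_exp_of_nonneg (sum_nonneg fun a _ => hy₀ a) K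
    _ ≤ Real.exp (∑' a, y a) := Real.exp_le_exp.2 (hy.sum_le_tsum J fun a _ => hy₀ a)

end ProdCountFactorial

/-- The number `z_μ = ∏ j, j ^ μ_j * μ_j !`, where `μ_j` is the multiplicity of `j` in `μ`: the
order of the centralizer of a permutation with cycle structure `μ`. -/
def centralizerOrder (μ : Multiset ℕ) : ℕ := μ.prod * prodCountFactorial μ

/-- The probability `1 / z_μ` that a uniformly random permutation has cycle structure `μ`.
It is `0` when `0 ∈ μ`, because then `z_μ = 0`; such multisets are not cycle structures. -/
noncomputable def cycleWeight (μ : Multiset ℕ) : ℝ := (centralizerOrder μ : ℝ)⁻¹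

lemma cycleWeight_nonneg (μ : Multiset ℕ) : 0 ≤ cycleWeight μ := by
  unfold cycleWeight
  positivity

lemma cycleWeight_eq_zero_of_zero_mem {μ : Multiset ℕ} (h : 0 ∈ μ) : cycleWeight μ = 0 := by
  simp [cycleWeight, centralizerOrder, Multiset.prod_eq_zero h]

lemma cycleWeight_cons (j : ℕ) (μ : Multiset ℕ) :
    cycleWeight (j ::ₘ μ) = cycleWeight μ / (j * (μ.count j + 1)) := by
  simp only [cycleWeight, centralizerOrder, Multiset.prod_cons, prodCountFactorial_cons]
  push_cast
  rw [div_eq_mul_inv, ← mul_inv]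
  ring

lemma cycleWeight_cons_of_notMem {j : ℕ} {μ : Multiset ℕ} (h : j ∉ μ) :
    cycleWeight (j ::ₘ μ) = cycleWeight μ / j := by
  rw [cycleWeight_cons, Multiset.count_eq_zero_of_notMem h, Nat.cast_zero, zero_add, mul_one]

lemma mul_cycleWeight_cons_le (j : ℕ) (μ : Multiset ℕ) :
    j * cycleWeight (j ::ₘ μ) ≤ cycleWeight μ := by
  rcases j.eq_zero_or_pos with rfl | hj
  · simpa using cycleWeight_nonneg μ
  · have hj' : (0 : ℝ) < j := Nat.cast_pos.2 hj
    rw [cycleWeight_cons, ← div_div, mul_div_assoc', mul_div_cancel₀ _ hj'.ne']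
    exact div_le_self (cycleWeight_nonneg μ) (by simp)

theorem summable_pow_card_mul_cycleWeight_pow {r : ℕ} (hr : 2 ≤ r) {c : ℝ} (hc : 0 ≤ c) :
    Summable fun μ : Multiset ℕ => (c ^ μ.card * cycleWeight μ) ^ r := by
  set y : ℕ → ℝ := fun j => (c * (j : ℝ)⁻¹) ^ r
  have hy : Summable y := by
    simpa only [y, mul_pow, inv_pow] using
      (Real.summable_nat_pow_inv.2 (by lia : 1 < r)).mul_left (c ^ r)
  refine (summable_prod_map_div_prodCountFactorial (fun j => by positivity) hy).of_nonneg_of_le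
    (fun μ => by have := cycleWeight_nonneg μ; positivity) fun μ => ?_
  have hprod : (μ.map y).prod = (c ^ μ.card * (μ.prod : ℝ)⁻¹) ^ r := by
    rw [Multiset.prod_map_pow, Multiset.prod_map_mul, Multiset.map_const', Multiset.prod_replicate,
      Multiset.prod_map_inv, Nat.cast_multiset_prod]
  have hfac : (1 : ℝ) ≤ prodCountFactorial μ := by
    exact_mod_cast prodCountFactorial_pos μ
  calc (c ^ μ.card * cycleWeight μ) ^ r
      = (μ.map y).prod / (prodCountFactorial μ : ℝ) ^ r := by
        rw [hprod, ← div_pow, cycleWeight, centralizerOrder, Nat.cast_mul, mul_inv, ← mul_assoc,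
          div_eq_mul_inv]
    _ ≤ (μ.map y).prod / prodCountFactorial μ := by
        rw [hprod]
        gcongr
        exact le_self_pow₀ hfac (by lia)

section Counting

lemma card_forall_apply_eq {ι α β : Type*} [Fintype ι] [Nonempty ι] [Fintype α] [Fintype β]
    [DecidableEq β] (f : α → β) :
    Nat.card {v : ι → α // ∀ i j, f (v i) = f (v j)} =
      ∑ b, #{a | f a = b} ^ Fintype.card ι := by
  classical
  let i₀ : ι := Classical.arbitrary ι
  rw [Nat.card_eq_fintype_card, Fintype.card_subtype,
    card_eq_sum_card_fiberwise (f := fun v => f (v i₀)) (t := univ) (fun _ _ => mem_univ _)]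
  refine sum_congr rfl fun b _ => ?_
  rw [← Finset.card_univ, ← prod_const, ← Fintype.card_piFinset]
  congr 1
  ext v
  simp only [mem_filter, mem_univ, true_and, Fintype.mem_piFinset]
  exact ⟨fun ⟨h, hb⟩ i => (h i i₀).trans hb, fun h => ⟨fun i j => (h i).trans (h j).symm, h i₀⟩⟩

lemma parts_eq_filter_add_replicate {n : ℕ} (l : n.Partition) :
    l.parts = l.parts.filter (2 ≤ ·) + Multiset.replicate (l.parts.count 1) 1 := by
  rw [← Multiset.filter_eq', add_comm]
  conv_lhs => rw [← Multiset.filter_add_not (· = 1) l.parts]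
  congr 1
  refine Multiset.filter_congr fun j hj => ?_
  have := l.parts_pos hj
  lia

lemma sum_filter_two_le_parts_add_count_one {n : ℕ} (l : n.Partition) :
    (l.parts.filter (2 ≤ ·)).sum + l.parts.count 1 = n := by
  have hsum := l.parts_sum
  rw [parts_eq_filter_add_replicate] at hsum
  simpa only [Multiset.sum_add, Multiset.sum_replicate, smul_eq_mul, mul_one] using hsum

lemma partition_ext_of_filter_two_le {n : ℕ} {l l' : n.Partition}
    (h : l.parts.filter (2 ≤ ·) = l'.parts.filter (2 ≤ ·)) : l = l' := by
  have hcount : l.parts.count 1 = l'.parts.count 1 := by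
    have hl := sum_filter_two_le_parts_add_count_one l
    rw [h] at hl
    exact Nat.add_left_cancel (hl.trans (sum_filter_two_le_parts_add_count_one l').symm)
  ext1
  rw [parts_eq_filter_add_replicate, h, hcount, ← parts_eq_filter_add_replicate]

variable {α : Type*} [Fintype α] [DecidableEq α]

lemma partition_eq_iff_cycleType_eq (σ : Equiv.Perm α) (l : (Fintype.card α).Partition) :
    σ.partition = l ↔ σ.cycleType = l.parts.filter (2 ≤ ·) := by
  rw [← Equiv.Perm.filter_parts_partition_eq_cycleType]
  exact ⟨fun h => h ▸ rfl, partition_ext_of_filter_two_le⟩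

theorem card_partition_eq_mul_centralizerOrder (l : (Fintype.card α).Partition) :
    #{σ : Equiv.Perm α | σ.partition = l} * centralizerOrder l.parts = (Fintype.card α)! := by
  set c := l.parts.filter (2 ≤ ·)
  set k := l.parts.count 1
  have hparts : l.parts = c + Multiset.replicate k 1 := parts_eq_filter_add_replicate l
  have hsum : c.sum + k = Fintype.card α := sum_filter_two_le_parts_add_count_one l
  have hc : ∀ j ∈ c, 2 ≤ j := fun j hj => (Multiset.mem_filter.1 hj).2
  have hz : centralizerOrder l.parts =
      (Fintype.card α - c.sum)! * c.prod * ∏ j ∈ c.toFinset, (c.count j)! := by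
    rw [centralizerOrder, hparts, prodCountFactorial_add_replicate fun h => by simpa using hc 1 h,
      Multiset.prod_add, Multiset.prod_replicate, one_pow, mul_one, ← hsum,
      Nat.add_sub_cancel_left, prodCountFactorial]
    ring
  simp_rw [partition_eq_iff_cycleType_eq]
  rw [hz, Equiv.Perm.card_of_cycleType_mul_eq, if_pos ⟨by lia, hc⟩]

lemma card_partition_eq_div_factorial (l : (Fintype.card α).Partition) :
    (#{σ : Equiv.Perm α | σ.partition = l} : ℝ) / (Fintype.card α)! = cycleWeight l.parts := by
  have h := card_partition_eq_mul_centralizerOrder l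
  have hne : #{σ : Equiv.Perm α | σ.partition = l} ≠ 0 :=
    left_ne_zero_of_mul (h.trans_ne (Nat.factorial_ne_zero _))
  rw [cycleWeight, ← h, Nat.cast_mul, div_mul_cancel_left₀ (Nat.cast_ne_zero.2 hne)]

lemma cycleStruct_eq_parts_partition {n : ℕ} (σ : Equiv.Perm (Fin n)) :
    cycleStruct σ = σ.partition.parts := by
  rw [cycleStruct, Equiv.Perm.parts_partition, Equiv.Perm.sum_cycleType, Fintype.card_fin]

theorem W_eq_sum_cycleWeight_pow {r : ℕ} (hr : r ≠ 0) (n : ℕ) :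
    W r n = ∑ l : n.Partition, cycleWeight l.parts ^ r := by
  have : NeZero r := ⟨hr⟩
  simp_rw [W, cycleStruct_eq_parts_partition, ← Nat.Partition.ext_iff]
  rw [card_forall_apply_eq, Nat.cast_sum, sum_div, Fintype.card_fin r]
  trans ∑ l : (Fintype.card (Fin n)).Partition, cycleWeight l.parts ^ r
  · have hfactorial : (Fintype.card (Fin n))! = n ! := by rw [Fintype.card_fin]
    refine sum_congr rfl fun l _ => ?_
    rw [← card_partition_eq_div_factorial, div_pow, hfactorial, Nat.cast_pow]
  · rw [Fintype.card_fin]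

end Counting

lemma hasSum_cycleWeight_pow_of_sum_eq {r : ℕ} (hr : r ≠ 0) (n : ℕ) :
    HasSum (fun μ : {μ : Multiset ℕ // μ.sum = n} => cycleWeight μ ^ r) (W r n) := by
  let g : n.Partition → {μ : Multiset ℕ // μ.sum = n} := fun l => ⟨l.parts, l.parts_sum⟩
  have hg : Function.Injective g := fun l l' h => Nat.Partition.ext (congrArg Subtype.val h)
  rw [W_eq_sum_cycleWeight_pow hr]
  refine (hg.hasSum_iff fun μ hμ => ?_).1
    (hasSum_fintype fun l : n.Partition => cycleWeight l.parts ^ r)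
  have hmem : 0 ∈ (μ : Multiset ℕ) := by
    by_contra h0
    exact hμ ⟨⟨μ, fun hi => Nat.pos_of_ne_zero (ne_of_mem_of_not_mem hi h0), μ.2⟩, rfl⟩
  rw [cycleWeight_eq_zero_of_zero_mem hmem, zero_pow hr]

theorem hasSum_W {r : ℕ} (hr : 2 ≤ r) :
    HasSum (W r) (∑' μ : Multiset ℕ, cycleWeight μ ^ r) := by
  have hs : Summable fun μ : Multiset ℕ => cycleWeight μ ^ r := by
    simpa using summable_pow_card_mul_cycleWeight_pow hr zero_le_one
  have hfiber := (Equiv.sigmaFiberEquiv (Multiset.sum : Multiset ℕ → ℕ)).hasSum_iff.2 hs.hasSum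
  exact hfiber.sigma fun n => hasSum_cycleWeight_pow_of_sum_eq (by lia) n

/-- The multisets that become a multiset of sum `n` by adjoining a largest element, which is then
necessarily `n - μ.sum`. -/
def withoutLargest (n : ℕ) : Set (Multiset ℕ) :=
  {μ | μ.sum ≤ n ∧ ∀ i ∈ μ, i ≤ n - μ.sum}

lemma sup_mem_of_ne_zero {α : Type*} [LinearOrder α] [OrderBot α] {μ : Multiset α} (h : μ ≠ 0) :
    μ.sup ∈ μ := by
  obtain ⟨a, ha, hsup⟩ := exists_mem_eq_sup μ.toFinset (Multiset.toFinset_nonempty.2 h) id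
  rw [sup_def, Multiset.map_id, Multiset.toFinset_val, Multiset.sup_dedup] at hsup
  exact hsup ▸ Multiset.mem_toFinset.1 ha

lemma sup_cons_of_mem_withoutLargest {n : ℕ} {μ : Multiset ℕ} (h : μ ∈ withoutLargest n) :
    ((n - μ.sum) ::ₘ μ).sup = n - μ.sum := by
  rw [Multiset.sup_cons, sup_eq_left]
  exact Multiset.sup_le.2 h.2

lemma sum_erase_sup_add_sup {μ : Multiset ℕ} (h : μ ≠ 0) :
    (μ.erase μ.sup).sum + μ.sup = μ.sum := by
  rw [add_comm, ← Multiset.sum_cons, Multiset.cons_erase (sup_mem_of_ne_zero h)]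

lemma sum_sub_sum_erase_sup {μ : Multiset ℕ} (h : μ ≠ 0) :
    μ.sum - (μ.erase μ.sup).sum = μ.sup :=
  Nat.sub_eq_of_eq_add' (sum_erase_sup_add_sup h).symm

lemma erase_sup_mem_withoutLargest {μ : Multiset ℕ} (h : μ ≠ 0) :
    μ.erase μ.sup ∈ withoutLargest μ.sum := by
  refine ⟨le_of_add_le_left (sum_erase_sup_add_sup h).le, fun i hi => ?_⟩
  rw [sum_sub_sum_erase_sup h]
  exact Multiset.le_sup (Multiset.mem_of_mem_erase hi)

/-- Multisets of sum `n` correspond to those obtained by removing one copy of a largest element. -/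
def eraseSupEquiv {n : ℕ} (hn : n ≠ 0) :
    {μ : Multiset ℕ // μ.sum = n} ≃ withoutLargest n :=
  have hne (μ : {μ : Multiset ℕ // μ.sum = n}) : μ.1 ≠ 0 := fun h => hn (by simp [← μ.2, h])
  { toFun μ := ⟨μ.1.erase μ.1.sup, by
      simpa only [μ.2] using erase_sup_mem_withoutLargest (hne μ)⟩
    invFun μ := ⟨(n - μ.1.sum) ::ₘ μ.1, by rw [Multiset.sum_cons, Nat.sub_add_cancel μ.2.1]⟩
    left_inv μ := by
      ext1
      have hsub := sum_sub_sum_erase_sup (hne μ)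
      rw [μ.2] at hsub
      simp only [hsub, Multiset.cons_erase (sup_mem_of_ne_zero (hne μ))]
    right_inv μ := by
      ext1
      simp only [sup_cons_of_mem_withoutLargest μ.2, Multiset.erase_cons_head] }

/-- `n` times the probability of the cycle structure obtained from `μ` by adjoining a largest part
so as to reach total size `n`, and `0` when this is impossible. -/
noncomputable def completionWeight (n : ℕ) : Multiset ℕ → ℝ :=
  (withoutLargest n).indicator fun μ => n * cycleWeight ((n - μ.sum) ::ₘ μ)

lemma completionWeight_nonneg (n : ℕ) (μ : Multiset ℕ) : 0 ≤ completionWeight n μ :=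
  Set.indicator_nonneg (fun _ _ => mul_nonneg n.cast_nonneg (cycleWeight_nonneg _)) μ

theorem hasSum_completionWeight_pow {r n : ℕ} (hr : r ≠ 0) (hn : n ≠ 0) :
    HasSum (fun μ => completionWeight n μ ^ r) ((n : ℝ) ^ r * W r n) := by
  have hpow : (fun μ => completionWeight n μ ^ r) = (withoutLargest n).indicator
      fun μ => (n : ℝ) ^ r * cycleWeight ((n - μ.sum) ::ₘ μ) ^ r := by
    simp_rw [← mul_pow]
    exact (Set.indicator_comp_of_zero (g := fun x : ℝ => x ^ r) (zero_pow hr)).symm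
  rw [hpow, ← hasSum_subtype_iff_indicator]
  exact (eraseSupEquiv hn).symm.hasSum_iff.2
    ((hasSum_cycleWeight_pow_of_sum_eq hr n).mul_left ((n : ℝ) ^ r))

lemma le_mul_two_pow_card_of_mem_withoutLargest {n : ℕ} {μ : Multiset ℕ}
    (h : μ ∈ withoutLargest n) : n ≤ (n - μ.sum) * 2 ^ μ.card :=
  calc n = (n - μ.sum) + μ.sum := (Nat.sub_add_cancel h.1).symm
    _ ≤ (n - μ.sum) + μ.card * (n - μ.sum) :=
        Nat.add_le_add_left (Multiset.sum_le_card_nsmul μ _ h.2) _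
    _ = (n - μ.sum) * (μ.card + 1) := by ring
    _ ≤ (n - μ.sum) * 2 ^ μ.card := Nat.mul_le_mul_left _ Nat.lt_two_pow_self

lemma completionWeight_le (n : ℕ) (μ : Multiset ℕ) :
    completionWeight n μ ≤ 2 ^ μ.card * cycleWeight μ := by
  refine Set.indicator_apply_le' (fun h => ?_)
    fun _ => mul_nonneg (by positivity) (cycleWeight_nonneg μ)
  have hn : (n : ℝ) ≤ (n - μ.sum : ℕ) * 2 ^ μ.card := by
    exact_mod_cast le_mul_two_pow_card_of_mem_withoutLargest h
  calc n * cycleWeight ((n - μ.sum) ::ₘ μ)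
      ≤ ((n - μ.sum : ℕ) * 2 ^ μ.card) * cycleWeight ((n - μ.sum) ::ₘ μ) :=
        mul_le_mul_of_nonneg_right hn (cycleWeight_nonneg _)
    _ = 2 ^ μ.card * ((n - μ.sum : ℕ) * cycleWeight ((n - μ.sum) ::ₘ μ)) := by ring
    _ ≤ 2 ^ μ.card * cycleWeight μ :=
        mul_le_mul_of_nonneg_left (mul_cycleWeight_cons_le _ μ) (by positivity)

lemma completionWeight_eq_of_two_mul_sum_lt {n : ℕ} {μ : Multiset ℕ} (h : 2 * μ.sum < n) :
    completionWeight n μ = cycleWeight μ * (n / (n - μ.sum)) := by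
  have hlt : ∀ i ∈ μ, i < n - μ.sum := fun i hi => by
    have := Multiset.le_sum_of_mem hi
    lia
  have hmem : μ ∈ withoutLargest n := ⟨by lia, fun i hi => (hlt i hi).le⟩
  rw [completionWeight, Set.indicator_of_mem hmem,
    cycleWeight_cons_of_notMem fun hi => (hlt _ hi).false, Nat.cast_sub hmem.1]
  ring

theorem tendsto_completionWeight (μ : Multiset ℕ) :
    Tendsto (fun n => completionWeight n μ) atTop (𝓝 (cycleWeight μ)) := by
  have hratio : Tendsto (fun n : ℕ => (n : ℝ) / (n - μ.sum)) atTop (𝓝 1) := by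
    simpa only [← sub_eq_add_neg] using tendsto_natCast_div_add_atTop (-(μ.sum : ℝ))
  have hlim := hratio.const_mul (cycleWeight μ)
  rw [mul_one] at hlim
  refine hlim.congr' ?_
  filter_upwards [eventually_gt_atTop (2 * μ.sum)] with n hn
  exact (completionWeight_eq_of_two_mul_sum_lt hn).symm

theorem stmt_9 (r : ℕ) (hr : 2 ≤ r) :
    Summable (fun m : ℕ => W r m) ∧
      Filter.Tendsto (fun n : ℕ => (n : ℝ) ^ r * W r n) Filter.atTop
        (nhds (∑' m : ℕ, W r m)) := by
  have hW : HasSum (W r) (∑' μ : Multiset ℕ, cycleWeight μ ^ r) := hasSum_W hr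
  refine ⟨hW.summable, ?_⟩
  rw [hW.tsum_eq]
  have hdom (n : ℕ) (μ : Multiset ℕ) :
      ‖completionWeight n μ ^ r‖ ≤ (2 ^ μ.card * cycleWeight μ) ^ r := by
    have h0 := completionWeight_nonneg n μ
    rw [Real.norm_of_nonneg (pow_nonneg h0 r)]
    exact pow_le_pow_left₀ h0 (completionWeight_le n μ) r
  have hlim : Tendsto (fun n => ∑' μ, completionWeight n μ ^ r) atTop
      (𝓝 (∑' μ, cycleWeight μ ^ r)) :=
    tendsto_tsum_of_dominated_convergence
      (summable_pow_card_mul_cycleWeight_pow hr zero_le_two)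
      (fun μ => (tendsto_completionWeight μ).pow r) (.of_forall hdom)
  refine hlim.congr' ?_
  filter_upwards [eventually_ne_atTop 0] with n hn
  exact (hasSum_completionWeight_pow (by lia) hn).tsum_eq
end
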